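/- arXiv:1210.0296 — 4 statements merged into one kernel-verified Lean document; each statement's English description precedes it below -/
import Mathlib

section
/- (Energy inequality and energy conservation.) Let the collision kernel b : (0, π/2] → [0,∞) be measurable and satisfy, for some α₀ ∈ (0,2], ∫₀^{π/2} sin^{α₀}(θ/2) · b(cos θ) · sin θ dθ < ∞. Let F₀ be a Borel probability measure on ℝ³ with ∫ |v|² dF₀(v) < ∞, and let (F_t)_{t≥0} be a family of Borel probability measures on ℝ³ whose characteristic functions ψ(t,·) form a solution of the Fourier-transformed (Bobylev) homogeneous Boltzmann Cauchy problem with initial datum the characteristic function of F₀, continuous in t with values in 𝒦². Then for every t > 0: ∫_{ℝ³} |v|² dF_t(v) ≤ ∫_{ℝ³} |v|² dF₀(v). If moreover α₀ ≤ 1, then equality holds for every t > 0 (the energy is conserved). -/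
noncomputable section

open MeasureTheory Real Filter Metric Set
open scoped RealInnerProductSpace Topology

/-- ℝ³ as a Euclidean space. -/
abbrev E3 : Type := EuclideanSpace ℝ (Fin 3)

/-- The surface measure on the unit sphere S² ⊂ ℝ³. -/
def sphμ : Measure (sphere (0 : E3) 1) := (volume : Measure E3).toSphere

/-- The characteristic function (Fourier transform) of a Borel measure on ℝ³,
`ψ(ξ) = ∫ e^{-i v·ξ} dΨ(v)`. -/
def charFn (Ψ : Measure E3) (ξ : E3) : ℂ :=
  ∫ v, Complex.exp (-(Complex.I * (⟪v, ξ⟫ : ℂ))) ∂Ψ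

/-- `ψ` is a characteristic function of some Borel probability measure on ℝ³. -/
def IsCharFn (ψ : E3 → ℂ) : Prop :=
  ∃ Ψ : Measure E3, IsProbabilityMeasure Ψ ∧ ψ = charFn Ψ

/-- Finiteness of `‖φ - 1‖_α`, i.e. the quantitative part of membership in `𝒦^α`. -/
def KBdd (α : ℝ) (φ : E3 → ℂ) : Prop :=
  ∃ C : ℝ, ∀ ξ : E3, ξ ≠ 0 → ‖φ ξ - 1‖ ≤ C * ‖ξ‖ ^ α

/-- Membership in the space `𝒦^α`. -/
def memK (α : ℝ) (φ : E3 → ℂ) : Prop := IsCharFn φ ∧ KBdd α φ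

/-- The distance `‖φ - φ'‖_α = sup_{ξ ≠ 0} |φ(ξ) - φ'(ξ)|/|ξ|^α` on `𝒦^α`. -/
def Kdist (α : ℝ) (φ φ' : E3 → ℂ) : ℝ :=
  ⨆ ξ : {ξ : E3 // ξ ≠ 0}, ‖φ ξ.1 - φ' ξ.1‖ / ‖(ξ.1 : E3)‖ ^ α

/-- `ξ⁺ = ξ/2 + (|ξ|/2)σ`. -/
def xiPlus (ξ : E3) (σ : sphere (0 : E3) 1) : E3 := (1/2 : ℝ) • ξ + (‖ξ‖ / 2) • (σ : E3)

/-- `ξ⁻ = ξ/2 - (|ξ|/2)σ`. -/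
def xiMinus (ξ : E3) (σ : sphere (0 : E3) 1) : E3 := (1/2 : ℝ) • ξ - (‖ξ‖ / 2) • (σ : E3)

/-- The Bobylev collision integrand at time `t`, frequency `ξ`, direction `σ`. -/
def bobylevIntegrand (b : ℝ → ℝ) (ψ : ℝ → E3 → ℂ) (t : ℝ) (ξ : E3)
    (σ : sphere (0 : E3) 1) : ℂ :=
  (b (⟪ξ, (σ : E3)⟫ / ‖ξ‖) : ℂ) *
    (ψ t (xiPlus ξ σ) * ψ t (xiMinus ξ σ) - ψ t ξ)

/-- `ψ : [0,∞) × ℝ³ → ℂ` is a solution of the Fourier-transformed (Bobylev)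
homogeneous Boltzmann Cauchy problem with collision kernel `b` and initial datum `ψ₀`. -/
structure IsBobylevSolution (b : ℝ → ℝ) (ψ : ℝ → E3 → ℂ) (ψ₀ : E3 → ℂ) : Prop where
  cont : ContinuousOn (fun p : ℝ × E3 => ψ p.1 p.2) (Set.Ici 0 ×ˢ Set.univ)
  init : ψ 0 = ψ₀
  isCharFn : ∀ t ≥ 0, IsCharFn (ψ t)
  integrable : ∀ t ≥ 0, ∀ ξ : E3, Integrable (bobylevIntegrand b ψ t ξ) sphμ
  eq : ∀ t ≥ 0, ∀ ξ : E3, HasDerivWithinAt (fun τ => ψ τ ξ)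
      (∫ σ, bobylevIntegrand b ψ t ξ σ ∂sphμ) (Set.Ici 0) t

/-- Continuity of `t ↦ ψ(t,·)` from `[0,∞)` into the metric space `(𝒦^α, ‖·‖_α)`. -/
def KContinuous (α : ℝ) (ψ : ℝ → E3 → ℂ) : Prop :=
  ∀ t₀ ∈ Set.Ici (0:ℝ), Tendsto (fun t => Kdist α (ψ t) (ψ t₀)) (𝓝[Set.Ici (0:ℝ)] t₀) (𝓝 0)

/-- The angular singularity assumption `b(cos θ) θ^{2+2s} → K` as `θ → 0+`. -/
def KernelSingular (b : ℝ → ℝ) (s K : ℝ) : Prop :=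
  Tendsto (fun θ : ℝ => b (Real.cos θ) * θ ^ (2 + 2*s)) (𝓝[>] 0) (𝓝 K)


/-- Second order Taylor remainder of `exp (-i x)`. -/
def fR (x : ℝ) : ℂ := Complex.exp (-(Complex.I * (x:ℂ))) - 1 + Complex.I * x + (x:ℂ)^2/2

/-- Derivative of `fR`. -/
def gR (x : ℝ) : ℂ := -Complex.I * Complex.exp (-(Complex.I * (x:ℂ))) + Complex.I + x

lemma hasDerivAt_expR (x : ℝ) : HasDerivAt (fun x : ℝ => Complex.exp (-(Complex.I * (x:ℂ))))
    (-Complex.I * Complex.exp (-(Complex.I * (x:ℂ)))) x := by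
  have h1 : HasDerivAt (fun z : ℂ => Complex.exp (-(Complex.I * z)))
      (Complex.exp (-(Complex.I * (x:ℂ))) * (-(Complex.I * 1))) (x:ℂ) :=
    (((hasDerivAt_id (x:ℂ)).const_mul Complex.I).neg).cexp
  have := h1.comp_ofReal
  convert this using 1
  ring

lemma hasDerivAt_fR (x : ℝ) : HasDerivAt fR (gR x) x := by
  have h0 : HasDerivAt (fun x : ℝ => (x:ℂ)) 1 x := Complex.ofRealCLM.hasDerivAt
  have := (((hasDerivAt_expR x).sub_const 1).add (h0.const_mul Complex.I)).add ((h0.pow 2).div_const 2)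
  refine HasDerivAt.congr_deriv (f := fR) this ?_
  unfold gR
  push_cast; ring

lemma hasDerivAt_gR (x : ℝ) :
    HasDerivAt gR (1 - Complex.exp (-(Complex.I * (x:ℂ)))) x := by
  have h0 : HasDerivAt (fun x : ℝ => (x:ℂ)) 1 x := Complex.ofRealCLM.hasDerivAt
  have := (((hasDerivAt_expR x).const_mul (-Complex.I)).add_const Complex.I).add h0
  refine HasDerivAt.congr_deriv (f := gR) this ?_
  linear_combination (Complex.exp (-(Complex.I * (x:ℂ)))) * (Complex.I_mul_I)

lemma norm_expR (x : ℝ) : ‖Complex.exp (-(Complex.I * (x:ℂ)))‖ = 1 := by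
  have := Complex.norm_exp_I_mul_ofReal (-x)
  rw [← this]; congr 2; push_cast; ring

lemma norm_one_sub_expR (x : ℝ) : ‖1 - Complex.exp (-(Complex.I * (x:ℂ)))‖ ≤ min 2 |x| := by
  apply le_min
  · calc _ ≤ ‖(1:ℂ)‖ + ‖Complex.exp (-(Complex.I * (x:ℂ)))‖ := norm_sub_le _ _
      _ = 2 := by rw [norm_expR]; norm_num
  · have := Real.norm_exp_I_mul_ofReal_sub_one_le (x := -x)
    rw [norm_neg, Real.norm_eq_abs] at this
    rw [norm_sub_rev]
    rwa [show -(Complex.I * (x:ℂ)) = Complex.I * ((-x : ℝ) : ℂ) by push_cast; ring]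

lemma gR_zero : gR 0 = 0 := by simp [gR]
lemma fR_zero : fR 0 = 0 := by simp [fR]

lemma gR_lip {Y x y : ℝ} (hx : |x| ≤ Y) (hy : |y| ≤ Y) :
    ‖gR x - gR y‖ ≤ min 2 Y * |x - y| := by
  have := (convex_Icc (-Y) Y).norm_image_sub_le_of_norm_hasDerivWithin_le
    (f := gR) (C := min 2 Y) (fun z _ => (hasDerivAt_gR z).hasDerivWithinAt)
    (fun z hz => (norm_one_sub_expR z).trans (min_le_min le_rfl (abs_le.2 hz)))
    (abs_le.1 hy) (abs_le.1 hx)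
  simpa using this

lemma fR_lip {Y x y : ℝ} (hx : |x| ≤ Y) (hy : |y| ≤ Y) :
    ‖fR x - fR y‖ ≤ min 2 Y * Y * |x - y| := by
  have hY : 0 ≤ Y := (abs_nonneg _).trans hx
  have := (convex_Icc (-Y) Y).norm_image_sub_le_of_norm_hasDerivWithin_le
    (f := fR) (C := min 2 Y * Y) (fun z _ => (hasDerivAt_fR z).hasDerivWithinAt)
    (fun z hz => by
      have h := gR_lip (abs_le.2 hz) (y := 0) (by simpa using hY)
      rw [gR_zero, sub_zero, sub_zero] at h
      exact h.trans (mul_le_mul_of_nonneg_left (abs_le.2 hz) (le_min (by norm_num) hY)))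
    (abs_le.1 hy) (abs_le.1 hx)
  simpa using this

lemma fR_bound {Y x : ℝ} (hx : |x| ≤ Y) : ‖fR x‖ ≤ min 2 Y * x ^ 2 := by
  have := fR_lip (le_refl |x|) (y := 0) (by simp)
  rw [fR_zero, sub_zero, sub_zero, mul_assoc, ← sq, sq_abs] at this
  exact this.trans (mul_le_mul_of_nonneg_right (min_le_min le_rfl hx) (sq_nonneg _))

lemma fR_second {Y p d : ℝ} (h : |p| + |d| ≤ Y) :
    ‖fR (p + d) + fR (p - d) - 2 * fR p‖ ≤ 2 * min 2 Y * d ^ 2 := by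
  have hY : 0 ≤ Y := le_trans (by positivity) h
  have hd : ∀ z : ℝ, HasDerivAt (fun τ : ℝ => fR (p + τ) + fR (p - τ) - 2 * fR p)
      (gR (p + z) - gR (p - z)) z := by
    intro z
    have h1 := (hasDerivAt_fR (p + z)).comp_const_add p z
    have h2 := (hasDerivAt_fR (p - z)).comp_const_sub p z
    simpa [sub_eq_add_neg] using (h1.add h2).sub_const (2 * fR p)
  have := (convex_Icc (-|d|) |d|).norm_image_sub_le_of_norm_hasDerivWithin_le
    (f := fun τ : ℝ => fR (p + τ) + fR (p - τ) - 2 * fR p) (C := 2 * min 2 Y * |d|)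
    (fun z _ => (hd z).hasDerivWithinAt)
    (fun z hz => by
      have hz' := abs_le.2 hz
      have a1 : |p + z| ≤ Y := (abs_add_le _ _).trans (by linarith)
      have a2 : |p - z| ≤ Y := (abs_sub _ _).trans (by linarith)
      have h := gR_lip a1 a2
      refine h.trans ?_
      have : |p + z - (p - z)| = 2 * |z| := by
        rw [show p + z - (p - z) = 2 * z by ring, abs_mul]; norm_num
      rw [this]
      have hm : 0 ≤ min 2 Y := le_min (by norm_num) hY
      nlinarith)
    (x := 0) (y := d) (by simp) (abs_le.1 le_rfl)
  simp only [add_zero, sub_zero] at this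
  rw [show fR p + fR p - 2 * fR p = 0 by ring, sub_zero, Real.norm_eq_abs, mul_assoc, ← sq, sq_abs] at this
  exact this

lemma pair_bound_nonneg {X x c d : ℝ} (hx : |x| ≤ X) (hc0 : 0 ≤ c) (hc1 : c ≤ 1)
    (hd : d ^ 2 ≤ X ^ 2 * (1 - c ^ 2) / 4) :
    ‖(fR (x/2 + (c*x/2 + d)) + fR (x/2 - (c*x/2 + d)) - fR x) +
      (fR (x/2 + (c*x/2 - d)) + fR (x/2 - (c*x/2 - d)) - fR x)‖
      ≤ 8 * (1 - c ^ 2) * (X ^ 2 * min 1 X) := by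
  have hX : 0 ≤ X := (abs_nonneg _).trans hx
  have hm : min 2 (2 * X) = 2 * min 1 X := by
    rw [mul_min_of_nonneg _ _ (by norm_num : (0:ℝ) ≤ 2), mul_one]
  have hm0 : 0 ≤ min 1 X := le_min (by norm_num) hX
  set m := min 1 X with hmdef
  have hdX : |d| ≤ X / 2 := by
    apply abs_le_of_sq_le_sq _ (by linarith)
    nlinarith [sq_nonneg (X * c)]
  have hx2 : x ^ 2 ≤ X ^ 2 := sq_le_sq' (abs_le.1 hx).1 (abs_le.1 hx).2
  set l := (1 + c) / 2 with hl
  set u := (1 - c) / 2 with hu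
  have hl0 : 0 ≤ l := by rw [hl]; linarith
  have hl1 : l ≤ 1 := by rw [hl]; linarith
  have hu0 : 0 ≤ u := by rw [hu]; linarith
  have hu1 : u ≤ 1 := by rw [hu]; linarith
  have hlx : |l * x| ≤ X := by
    rw [abs_mul, abs_of_nonneg hl0]; nlinarith [abs_nonneg x]
  have hux : |u * x| ≤ X := by
    rw [abs_mul, abs_of_nonneg hu0]; nlinarith [abs_nonneg x]
  have e1 := fR_second (Y := 2 * X) (p := l * x) (d := d) (by linarith)
  have e2 := fR_lip (Y := 2 * X) (x := l * x) (y := x) (by linarith) (by linarith)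
  have e3 := fR_bound (Y := 2 * X) (x := u * x - d) ((abs_sub _ _).trans (by linarith))
  have e4 := fR_bound (Y := 2 * X) (x := u * x + d) ((abs_add_le _ _).trans (by linarith))
  rw [hm] at e1 e2 e3 e4
  have e2' : |l * x - x| ≤ u * X := by
    rw [show l * x - x = - (u * x) by rw [hl, hu]; ring, abs_neg, abs_mul, abs_of_nonneg hu0]
    exact mul_le_mul_of_nonneg_left hx hu0
  have key : (fR (x/2 + (c*x/2 + d)) + fR (x/2 - (c*x/2 + d)) - fR x) +
      (fR (x/2 + (c*x/2 - d)) + fR (x/2 - (c*x/2 - d)) - fR x)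
      = (fR (l * x + d) + fR (l * x - d) - 2 * fR (l * x)) + 2 * (fR (l * x) - fR x)
        + fR (u * x - d) + fR (u * x + d) := by
    rw [show x/2 + (c*x/2 + d) = l * x + d by rw [hl]; ring,
      show x/2 - (c*x/2 + d) = u * x - d by rw [hu]; ring,
      show x/2 + (c*x/2 - d) = l * x - d by rw [hl]; ring,
      show x/2 - (c*x/2 - d) = u * x + d by rw [hu]; ring]
    ring
  rw [key]
  have hus : 2 * u ≤ 1 - c ^ 2 := by rw [hu]; nlinarith
  have hu2 : u ^ 2 ≤ (1 - c ^ 2) / 4 := by rw [hu]; nlinarith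
  have n2 : ‖2 * (fR (l * x) - fR x)‖ ≤ 2 * (2 * m * (2 * X) * (u * X)) := by
    rw [norm_mul, Complex.norm_two]
    have : 2 * m * (2 * X) * |l * x - x| ≤ 2 * m * (2 * X) * (u * X) :=
      mul_le_mul_of_nonneg_left e2' (by positivity)
    linarith
  have n := (norm_add_le _ _).trans (add_le_add (norm_add₃_le.trans
    (add_le_add (add_le_add e1 n2) e3)) e4)
  refine n.trans ?_
  have : 2 * (2 * m) * d ^ 2 + 2 * (2 * m * (2 * X) * (u * X)) + 2 * m * (u * x - d) ^ 2 +
      2 * m * (u * x + d) ^ 2 = m * (8 * d ^ 2 + 4 * X ^ 2 * (2 * u) + 4 * (u ^ 2 * x ^ 2)) := by ring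
  rw [this]
  have hs : 0 ≤ 1 - c ^ 2 := by nlinarith
  have b3 : u ^ 2 * x ^ 2 ≤ (1 - c ^ 2) / 4 * X ^ 2 := mul_le_mul hu2 hx2 (sq_nonneg _) (by linarith)
  have b2 : X ^ 2 * (2 * u) ≤ X ^ 2 * (1 - c ^ 2) := mul_le_mul_of_nonneg_left hus (sq_nonneg _)
  have : 8 * d ^ 2 + 4 * X ^ 2 * (2 * u) + 4 * (u ^ 2 * x ^ 2) ≤ 8 * (1 - c ^ 2) * X ^ 2 := by
    nlinarith [mul_nonneg hs (sq_nonneg X)]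
  calc _ ≤ m * (8 * (1 - c ^ 2) * X ^ 2) := mul_le_mul_of_nonneg_left this hm0
    _ = _ := by ring

lemma pair_bound {X x c d : ℝ} (hx : |x| ≤ X) (hc : |c| ≤ 1)
    (hd : d ^ 2 ≤ X ^ 2 * (1 - c ^ 2) / 4) :
    ‖(fR (x/2 + (c*x/2 + d)) + fR (x/2 - (c*x/2 + d)) - fR x) +
      (fR (x/2 + (c*x/2 - d)) + fR (x/2 - (c*x/2 - d)) - fR x)‖
      ≤ 8 * (1 - c ^ 2) * (X ^ 2 * min 1 X) := by
  rcases le_total 0 c with h | h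
  · exact pair_bound_nonneg hx h (abs_le.1 hc).2 hd
  · have := pair_bound_nonneg (c := -c) (d := d) hx (by linarith) (by linarith [(abs_le.1 hc).1])
      (by simpa using hd)
    rw [neg_sq] at this
    refine le_trans (le_of_eq ?_) this
    congr 1
    rw [show x/2 + (c*x/2 + d) = x/2 - (-c*x/2 - d) by ring,
      show x/2 - (c*x/2 + d) = x/2 + (-c*x/2 - d) by ring,
      show x/2 + (c*x/2 - d) = x/2 - (-c*x/2 + d) by ring,
      show x/2 - (c*x/2 - d) = x/2 + (-c*x/2 + d) by ring]
    ring

/-- Total energy of a measure. -/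
def En (F : Measure E3) : ℝ := ∫ v, ‖v‖ ^ 2 ∂F

/-- Directional second moment of a measure. -/
def Qf (F : Measure E3) (e : E3) : ℝ := ∫ v, ⟪v, e⟫ ^ 2 ∂F

/-- Truncated second moment used as modulus. -/
def Th (F : Measure E3) (r : ℝ) : ℝ := ∫ v, ‖v‖ ^ 2 * min 1 (r * ‖v‖) ∂F

/-- First basis vector. -/
def e0 : E3 := EuclideanSpace.single 0 1

/-- The (collision) difference. -/
def Phi (F : Measure E3) (ξ σ : E3) : ℂ :=
  charFn F ((1/2 : ℝ) • ξ + (‖ξ‖ / 2) • σ) * charFn F ((1/2 : ℝ) • ξ - (‖ξ‖ / 2) • σ) - charFn F ξ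

lemma isub {F : Measure E3} {f g : E3 → ℂ} (hf : Integrable f F) (hg : Integrable g F) :
    Integrable (fun v => f v - g v) F := hf.sub hg

lemma integrable_expR (F : Measure E3) [IsProbabilityMeasure F] (ξ : E3) :
    Integrable (fun v => Complex.exp (-(Complex.I * (⟪v, ξ⟫ : ℂ)))) F := by
  refine Integrable.of_bound (C := 1) (Continuous.aestronglyMeasurable (by fun_prop)) ?_
  filter_upwards with v using (norm_expR _).le

lemma charFn_eq_charFun (F : Measure E3) (ξ : E3) : charFn F ξ = charFun F (-ξ) := by
  unfold charFn charFun
  congr 1; ext v; rw [inner_neg_right]; congr 1; push_cast; ring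

lemma continuous_charFn (F : Measure E3) [IsProbabilityMeasure F] : Continuous (charFn F) := by
  have : charFn F = fun ξ => charFun F (-ξ) := funext (charFn_eq_charFun F)
  rw [this]
  exact continuous_charFun.comp continuous_neg

lemma charFn_zero (F : Measure E3) [IsProbabilityMeasure F] : charFn F 0 = 1 := by
  simp [charFn]

lemma norm_charFn_le (F : Measure E3) [IsProbabilityMeasure F] (ξ : E3) : ‖charFn F ξ‖ ≤ 1 := by
  rw [charFn_eq_charFun]; exact norm_charFun_le_one _

lemma inner_sq_le (v ξ : E3) : ⟪v, ξ⟫ ^ 2 ≤ ‖v‖ ^ 2 * ‖ξ‖ ^ 2 := by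
  have := abs_real_inner_le_norm v ξ
  rw [← mul_pow, ← sq_abs]
  exact pow_le_pow_left₀ (abs_nonneg _) this 2

lemma integrable_inner_sq {F : Measure E3} (h2 : Integrable (fun v => ‖v‖ ^ 2) F) (ξ : E3) :
    Integrable (fun v : E3 => ⟪v, ξ⟫ ^ 2) F := by
  refine (h2.mul_const (‖ξ‖ ^ 2)).mono' (Continuous.aestronglyMeasurable (by fun_prop)) ?_
  filter_upwards with v
  rw [Real.norm_eq_abs, abs_of_nonneg (sq_nonneg _)]
  exact inner_sq_le v ξ

lemma integrable_Th {F : Measure E3} (h2 : Integrable (fun v => ‖v‖ ^ 2) F) {r : ℝ} (hr : 0 ≤ r) :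
    Integrable (fun v : E3 => ‖v‖ ^ 2 * min 1 (r * ‖v‖)) F := by
  refine h2.mono' (Continuous.aestronglyMeasurable (by fun_prop)) ?_
  filter_upwards with v
  have h0 : 0 ≤ min 1 (r * ‖v‖) := le_min zero_le_one (by positivity)
  rw [Real.norm_eq_abs, abs_of_nonneg (by positivity)]
  have : min 1 (r * ‖v‖) ≤ 1 := min_le_left _ _
  nlinarith [sq_nonneg ‖v‖]

lemma Th_nonneg (F : Measure E3) {r : ℝ} (hr : 0 ≤ r) : 0 ≤ Th F r := by
  refine integral_nonneg fun v => ?_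
  have h0 : 0 ≤ min 1 (r * ‖v‖) := le_min zero_le_one (by positivity)
  positivity

lemma Th_le {F : Measure E3} (h2 : Integrable (fun v => ‖v‖ ^ 2) F) {r : ℝ} (hr : 0 ≤ r) :
    Th F r ≤ En F := by
  refine integral_mono (integrable_Th h2 hr) h2 fun v => ?_
  have : min 1 (r * ‖v‖) ≤ 1 := min_le_left _ _
  show ‖v‖ ^ 2 * min 1 (r * ‖v‖) ≤ ‖v‖ ^ 2
  nlinarith [sq_nonneg ‖v‖]

lemma tendsto_Th {F : Measure E3} (h2 : Integrable (fun v => ‖v‖ ^ 2) F) :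
    Tendsto (Th F) (𝓝[>] 0) (𝓝 0) := by
  have h : Tendsto (Th F) (𝓝[>] 0) (𝓝 (∫ v : E3, (0:ℝ) ∂F)) := by
    refine tendsto_integral_filter_of_dominated_convergence (fun v => ‖v‖ ^ 2) ?_ ?_ h2 ?_
    · filter_upwards with r using Continuous.aestronglyMeasurable (by fun_prop)
    · filter_upwards [self_mem_nhdsWithin] with r hr
      filter_upwards with v
      have hr' : 0 < r := hr
      have h0 : 0 ≤ min 1 (r * ‖v‖) := le_min zero_le_one (by positivity)
      rw [Real.norm_eq_abs, abs_of_nonneg (by positivity)]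
      have : min 1 (r * ‖v‖) ≤ 1 := min_le_left _ _
      nlinarith [sq_nonneg ‖v‖]
    · filter_upwards with v
      have : ContinuousAt (fun r : ℝ => ‖v‖ ^ 2 * min 1 (r * ‖v‖)) 0 := by fun_prop
      have := this.tendsto
      simp only [zero_mul, zero_le_one, min_eq_right, mul_zero] at this
      exact this.mono_left nhdsWithin_le_nhds
  simpa using h

lemma expR_eq (y : ℝ) : Complex.exp (-(Complex.I * (y:ℂ))) = fR y + 1 - Complex.I * y - (y:ℂ)^2/2 := by
  unfold fR; ring

lemma integrable_fR {F : Measure E3} [IsProbabilityMeasure F] (h2 : Integrable (fun v => ‖v‖ ^ 2) F)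
    (ξ : E3) : Integrable (fun v : E3 => fR ⟪v, ξ⟫) F := by
  refine ((integrable_inner_sq h2 ξ).const_mul 2).mono'
    (Continuous.aestronglyMeasurable (by unfold fR; fun_prop)) ?_
  filter_upwards with v
  exact (fR_bound le_rfl).trans (mul_le_mul_of_nonneg_right (min_le_left _ _) (sq_nonneg _))

lemma integrable_inner' {F : Measure E3} [IsProbabilityMeasure F] (h2 : Integrable (fun v => ‖v‖ ^ 2) F)
    (ξ : E3) : Integrable (fun v : E3 => ⟪v, ξ⟫) F := by
  refine ((integrable_const (1:ℝ)).add (integrable_inner_sq h2 ξ)).mono'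
    (Continuous.aestronglyMeasurable (by fun_prop)) ?_
  filter_upwards with v
  simp only [Pi.add_apply, Real.norm_eq_abs]
  nlinarith [sq_abs ⟪v, ξ⟫, sq_nonneg (|⟪v, ξ⟫| - 1)]

/-- second order expansion -/
lemma charFn_expand {F : Measure E3} [IsProbabilityMeasure F] (h2 : Integrable (fun v => ‖v‖ ^ 2) F)
    (ξ : E3) : ‖charFn F ξ - 1 + Complex.I * ((∫ v, ⟪v, ξ⟫ ∂F : ℝ) : ℂ) + ((Qf F ξ : ℝ) : ℂ) / 2‖
      ≤ 2 * ‖ξ‖ ^ 2 * Th F ‖ξ‖ := by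
  have hi := integrable_fR h2 ξ
  have h : charFn F ξ - 1 + Complex.I * ((∫ v, ⟪v, ξ⟫ ∂F : ℝ) : ℂ) + ((Qf F ξ : ℝ) : ℂ) / 2
      = ∫ v, fR ⟪v, ξ⟫ ∂F := by
    have h1 := integrable_expR F ξ
    have i1 : Integrable (fun v : E3 => ((⟪v, ξ⟫ : ℝ) : ℂ)) F := (integrable_inner' h2 ξ).ofReal
    have i2 : Integrable (fun v : E3 => ((⟪v, ξ⟫ : ℝ) : ℂ) ^ 2) F := by
      simpa using (integrable_inner_sq h2 ξ).ofReal (𝕜 := ℂ)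
    unfold fR Qf charFn
    rw [integral_add ((isub h1 (integrable_const _)).fun_add (i1.const_mul _)) (i2.div_const _),
      integral_add (isub h1 (integrable_const _)) (i1.const_mul _),
      integral_sub h1 (integrable_const _), integral_const_mul, integral_div, integral_complex_ofReal]
    have : ∫ v : E3, ((⟪v, ξ⟫ : ℝ) : ℂ) ^ 2 ∂F = ((∫ v, ⟪v, ξ⟫ ^ 2 ∂F : ℝ) : ℂ) := by
      rw [← integral_complex_ofReal]; simp
    rw [this]; simp
  rw [h]
  unfold Th
  rw [← integral_const_mul]
  refine norm_integral_le_of_norm_le ((integrable_Th h2 (norm_nonneg ξ)).const_mul _) ?_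
  filter_upwards with v
  have a := abs_real_inner_le_norm v ξ
  have b := fR_bound (a.trans_eq (mul_comm _ _))
  have c := inner_sq_le v ξ
  have d : min 2 (‖ξ‖ * ‖v‖) ≤ 2 * min 1 (‖ξ‖ * ‖v‖) := by
    rw [mul_min_of_nonneg _ _ (by norm_num : (0:ℝ) ≤ 2), mul_one]
    exact min_le_min le_rfl (by nlinarith [mul_nonneg (norm_nonneg ξ) (norm_nonneg v)])
  have d0 : 0 ≤ min 1 (‖ξ‖ * ‖v‖) := le_min zero_le_one (by positivity)
  calc _ ≤ _ := b
    _ ≤ (2 * min 1 (‖ξ‖ * ‖v‖)) * (‖v‖ ^ 2 * ‖ξ‖ ^ 2) := mul_le_mul d c (sq_nonneg _) (by positivity)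
    _ = _ := by ring

/-- Rotation by a quarter turn around the first axis. -/
def Jlin : E3 →ₗ[ℝ] E3 where
  toFun v := !₂[v 0, -v 2, v 1]
  map_add' v w := by ext i; fin_cases i <;> simp; ring
  map_smul' c v := by ext i; fin_cases i <;> simp

lemma norm_sq3 (v : E3) : ‖v‖ ^ 2 = v 0 ^ 2 + v 1 ^ 2 + v 2 ^ 2 := by
  rw [EuclideanSpace.norm_sq_eq, Fin.sum_univ_three]; simp

lemma inner3 (v w : E3) : ⟪v, w⟫ = v 0 * w 0 + v 1 * w 1 + v 2 * w 2 := by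
  rw [PiLp.inner_apply, Fin.sum_univ_three]; simp; ring

@[simp] lemma Jlin_0 (v : E3) : Jlin v 0 = v 0 := rfl
@[simp] lemma Jlin_1 (v : E3) : Jlin v 1 = - v 2 := rfl
@[simp] lemma Jlin_2 (v : E3) : Jlin v 2 = v 1 := rfl

lemma Jlin_norm (v : E3) : ‖Jlin v‖ = ‖v‖ := by
  rw [← sq_eq_sq₀ (norm_nonneg _) (norm_nonneg _), norm_sq3, norm_sq3]
  simp; ring

/-- `Jlin` as a linear isometry equivalence. -/
def Jiso : E3 ≃ₗᵢ[ℝ] E3 :=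
  LinearIsometry.toLinearIsometryEquiv ⟨Jlin, Jlin_norm⟩ rfl

@[simp] lemma Jiso_apply (v : E3) : Jiso v = Jlin v := rfl

lemma norm_e0 : ‖e0‖ = 1 := by simp [e0]

lemma e0_apply : e0 0 = 1 ∧ e0 1 = 0 ∧ e0 2 = 0 := by simp [e0]

/-- linear part of the collision term -/
def Lcol (r : ℝ) (v σ : E3) : ℂ :=
  Complex.exp (-(Complex.I * ((r * v 0 / 2 + r / 2 * ⟪v, σ⟫ : ℝ) : ℂ)))
   + Complex.exp (-(Complex.I * ((r * v 0 / 2 - r / 2 * ⟪v, σ⟫ : ℝ) : ℂ)))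
   - Complex.exp (-(Complex.I * ((r * v 0 : ℝ) : ℂ))) - 1

lemma Lcol_eq (r : ℝ) (v σ : E3) : Lcol r v σ =
    fR (r * v 0 / 2 + r / 2 * ⟪v, σ⟫) + fR (r * v 0 / 2 - r / 2 * ⟪v, σ⟫) - fR (r * v 0)
      - ((r ^ 2 / 4 * (⟪v, σ⟫ ^ 2 - v 0 ^ 2) : ℝ) : ℂ) := by
  unfold Lcol
  rw [expR_eq, expR_eq, expR_eq]; push_cast; ring

lemma Lcol_four {r : ℝ} (hr : 0 ≤ r) (v σ : E3) (hσ : ‖σ‖ = 1) :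
    ‖Lcol r v σ + Lcol r v (Jlin σ) + Lcol r v (Jlin (Jlin σ)) + Lcol r v (Jlin (Jlin (Jlin σ)))
      + ((r ^ 2 * (1 - σ 0 ^ 2) / 2 * (‖v‖ ^ 2 - 3 * v 0 ^ 2) : ℝ) : ℂ)‖
      ≤ 16 * (1 - σ 0 ^ 2) * r ^ 2 * (‖v‖ ^ 2 * min 1 (r * ‖v‖)) := by
  have hs : σ 0 ^ 2 + σ 1 ^ 2 + σ 2 ^ 2 = 1 := by rw [← norm_sq3, hσ]; norm_num
  have hs' : σ 1 ^ 2 + σ 2 ^ 2 = 1 - σ 0 ^ 2 := by linarith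
  have hx : |r * v 0| ≤ r * ‖v‖ := by
    rw [abs_mul, abs_of_nonneg hr]
    refine mul_le_mul_of_nonneg_left (abs_le_of_sq_le_sq ?_ (norm_nonneg _)) hr
    rw [norm_sq3]; nlinarith [sq_nonneg (v 1), sq_nonneg (v 2)]
  have hc : |σ 0| ≤ 1 := by
    refine abs_le_of_sq_le_sq ?_ zero_le_one
    nlinarith [sq_nonneg (σ 1), sq_nonneg (σ 2)]
  have hd1 : (r / 2 * (v 1 * σ 1 + v 2 * σ 2)) ^ 2 ≤ (r * ‖v‖) ^ 2 * (1 - σ 0 ^ 2) / 4 := by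
    have : (v 1 * σ 1 + v 2 * σ 2) ^ 2 ≤ ‖v‖ ^ 2 * (1 - σ 0 ^ 2) := by
      rw [norm_sq3, ← hs']
      nlinarith [sq_nonneg (v 1 * σ 2 - v 2 * σ 1), sq_nonneg (v 0 * σ 1), sq_nonneg (v 0 * σ 2)]
    nlinarith [mul_le_mul_of_nonneg_left this (sq_nonneg r)]
  have hd2 : (r / 2 * (-v 1 * σ 2 + v 2 * σ 1)) ^ 2 ≤ (r * ‖v‖) ^ 2 * (1 - σ 0 ^ 2) / 4 := by
    have : (-v 1 * σ 2 + v 2 * σ 1) ^ 2 ≤ ‖v‖ ^ 2 * (1 - σ 0 ^ 2) := by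
      rw [norm_sq3, ← hs']
      nlinarith [sq_nonneg (v 1 * σ 1 + v 2 * σ 2), sq_nonneg (v 0 * σ 1), sq_nonneg (v 0 * σ 2)]
    nlinarith [mul_le_mul_of_nonneg_left this (sq_nonneg r)]
  have p1 := pair_bound hx hc hd1
  have p2 := pair_bound hx hc hd2
  have i0 : r / 2 * ⟪v, σ⟫ = σ 0 * (r * v 0) / 2 + r / 2 * (v 1 * σ 1 + v 2 * σ 2) := by
    rw [inner3]; ring
  have i1 : r / 2 * ⟪v, Jlin σ⟫ = σ 0 * (r * v 0) / 2 + r / 2 * (-v 1 * σ 2 + v 2 * σ 1) := by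
    rw [inner3]; simp; ring
  have i2 : r / 2 * ⟪v, Jlin (Jlin σ)⟫ = σ 0 * (r * v 0) / 2 - r / 2 * (v 1 * σ 1 + v 2 * σ 2) := by
    rw [inner3]; simp; ring
  have i3 : r / 2 * ⟪v, Jlin (Jlin (Jlin σ))⟫
      = σ 0 * (r * v 0) / 2 - r / 2 * (-v 1 * σ 2 + v 2 * σ 1) := by
    rw [inner3]; simp; ring
  have hq : r ^ 2 / 4 * (⟪v, σ⟫ ^ 2 - v 0 ^ 2) + r ^ 2 / 4 * (⟪v, Jlin σ⟫ ^ 2 - v 0 ^ 2)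
      + r ^ 2 / 4 * (⟪v, Jlin (Jlin σ)⟫ ^ 2 - v 0 ^ 2)
      + r ^ 2 / 4 * (⟪v, Jlin (Jlin (Jlin σ))⟫ ^ 2 - v 0 ^ 2)
      = r ^ 2 * (1 - σ 0 ^ 2) / 2 * (‖v‖ ^ 2 - 3 * v 0 ^ 2) := by
    rw [norm_sq3, inner3, inner3, inner3, inner3, ← hs']
    simp only [Jlin_0, Jlin_1, Jlin_2]
    linear_combination (r ^ 2 * v 0 ^ 2) * hs
  rw [← hq, Lcol_eq, Lcol_eq, Lcol_eq, Lcol_eq, i0, i1, i2, i3]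
  have := norm_add_le_of_le p1 p2
  convert this using 1
  · congr 1; push_cast; ring
  · ring

lemma charFn_pm {F : Measure E3} {r : ℝ} (hr : 0 ≤ r) (σ : E3) :
    charFn F ((1/2 : ℝ) • (r • e0) + (‖r • e0‖ / 2) • σ)
      = ∫ v, Complex.exp (-(Complex.I * ((r * v 0 / 2 + r / 2 * ⟪v, σ⟫ : ℝ) : ℂ))) ∂F ∧
    charFn F ((1/2 : ℝ) • (r • e0) - (‖r • e0‖ / 2) • σ)
      = ∫ v, Complex.exp (-(Complex.I * ((r * v 0 / 2 - r / 2 * ⟪v, σ⟫ : ℝ) : ℂ))) ∂F ∧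
    charFn F (r • e0) = ∫ v, Complex.exp (-(Complex.I * ((r * v 0 : ℝ) : ℂ))) ∂F := by
  have h : ∀ v : E3, ⟪v, e0⟫ = v 0 := by intro v; rw [inner3]; simp [e0_apply]
  have hn : ‖r • e0‖ = r := by rw [norm_smul, norm_e0, mul_one, Real.norm_eq_abs, abs_of_nonneg hr]
  rw [hn]
  unfold charFn
  simp only [inner_add_right, inner_sub_right, inner_smul_right, h]
  refine ⟨?_, ?_, trivial⟩
  · refine integral_congr_ae (Eventually.of_forall fun v => ?_)
    dsimp only
    rw [show 1 / 2 * (r * v 0) + r / 2 * ⟪v, σ⟫ = r * v 0 / 2 + r / 2 * ⟪v, σ⟫ by ring]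
  · refine integral_congr_ae (Eventually.of_forall fun v => ?_)
    dsimp only
    rw [show 1 / 2 * (r * v 0) - r / 2 * ⟪v, σ⟫ = r * v 0 / 2 - r / 2 * ⟪v, σ⟫ by ring]

lemma norm_sq_pm {ξ σ : E3} (hσ : ‖σ‖ = 1) :
    ‖(1/2 : ℝ) • ξ + (‖ξ‖ / 2) • σ‖ ^ 2 = (‖ξ‖ ^ 2 + ‖ξ‖ * ⟪ξ, σ⟫) / 2 ∧
    ‖(1/2 : ℝ) • ξ - (‖ξ‖ / 2) • σ‖ ^ 2 = (‖ξ‖ ^ 2 - ‖ξ‖ * ⟪ξ, σ⟫) / 2 := by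
  constructor
  · rw [norm_add_sq_real, norm_smul, norm_smul, inner_smul_left, inner_smul_right, hσ]
    simp; ring
  · rw [norm_sub_sq_real, norm_smul, norm_smul, inner_smul_left, inner_smul_right, hσ]
    simp; ring

lemma key_lemma {F : Measure E3} [IsProbabilityMeasure F] (h2 : Integrable (fun v => ‖v‖ ^ 2) F)
    {C : ℝ} (hC : ∀ ξ, ‖charFn F ξ - 1‖ ≤ C * ‖ξ‖ ^ 2) {r : ℝ} (hr : 0 ≤ r) {σ : E3} (hσ : ‖σ‖ = 1) :
    ‖Phi F (r • e0) σ + Phi F (r • e0) (Jlin σ) + Phi F (r • e0) (Jlin (Jlin σ))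
        + Phi F (r • e0) (Jlin (Jlin (Jlin σ)))
      + ((r ^ 2 * (1 - σ 0 ^ 2) / 2 * (En F - 3 * Qf F e0) : ℝ) : ℂ)‖
      ≤ (1 - σ 0 ^ 2) * r ^ 2 * (16 * Th F r + C ^ 2 * r ^ 2) := by
  have hn : ‖r • e0‖ = r := by rw [norm_smul, norm_e0, mul_one, Real.norm_eq_abs, abs_of_nonneg hr]
  have he : ∀ v : E3, ⟪v, e0⟫ = v 0 := by intro v; rw [inner3]; simp [e0_apply]
  have hint : ∀ ξ, Integrable (fun v => Complex.exp (-(Complex.I * (⟪v, ξ⟫ : ℂ)))) F :=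
    integrable_expR F
  have iLcol : ∀ τ : E3, Integrable (fun v => Lcol r v τ) F := by
    intro τ
    refine Integrable.of_bound (C := 4) (Continuous.aestronglyMeasurable (by unfold Lcol; fun_prop)) ?_
    filter_upwards with v
    unfold Lcol
    refine (norm_sub_le _ _).trans ((add_le_add_left ((norm_sub_le _ _).trans
      (add_le_add_left (norm_add_le _ _) _)) _).trans ?_)
    rw [norm_expR, norm_expR, norm_expR, norm_one]; norm_num
  have hPhi : ∀ τ : E3, Phi F (r • e0) τ = ∫ v, Lcol r v τ ∂F
      + (charFn F ((1/2 : ℝ) • (r • e0) + (‖r • e0‖ / 2) • τ) - 1)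
        * (charFn F ((1/2 : ℝ) • (r • e0) - (‖r • e0‖ / 2) • τ) - 1) := by
    intro τ
    obtain ⟨c1, c2, c3⟩ := charFn_pm (F := F) hr τ
    have b : ∀ g : E3 → ℝ, Continuous g →
        Integrable (fun v => Complex.exp (-(Complex.I * (g v : ℂ)))) F := by
      intro g hg
      refine Integrable.of_bound (C := 1) (Continuous.aestronglyMeasurable (by fun_prop)) ?_
      filter_upwards with v using (norm_expR _).le
    have : ∫ v, Lcol r v τ ∂F = charFn F ((1/2 : ℝ) • (r • e0) + (‖r • e0‖ / 2) • τ)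
        + charFn F ((1/2 : ℝ) • (r • e0) - (‖r • e0‖ / 2) • τ) - charFn F (r • e0) - 1 := by
      rw [c1, c2, c3]
      have b1 := b (fun v => r * v 0 / 2 + r / 2 * ⟪v, τ⟫) (by fun_prop)
      have b2 := b (fun v => r * v 0 / 2 - r / 2 * ⟪v, τ⟫) (by fun_prop)
      have b3 := b (fun v => r * v 0) (by fun_prop)
      unfold Lcol
      rw [integral_sub (isub (b1.fun_add b2) b3) (integrable_const _), integral_sub (b1.fun_add b2) b3,
        integral_add b1 b2]
      simp
    rw [this]; unfold Phi; ring
  have hprod : ∀ τ : E3, ‖τ‖ = 1 → τ 0 = σ 0 →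
      ‖(charFn F ((1/2 : ℝ) • (r • e0) + (‖r • e0‖ / 2) • τ) - 1)
        * (charFn F ((1/2 : ℝ) • (r • e0) - (‖r • e0‖ / 2) • τ) - 1)‖
      ≤ C ^ 2 * r ^ 4 * (1 - σ 0 ^ 2) / 4 := by
    intro τ h1 h0
    obtain ⟨n1, n2⟩ := norm_sq_pm (ξ := r • e0) h1
    have hi : ⟪r • e0, τ⟫ = r * σ 0 := by
      rw [inner_smul_left, real_inner_comm, he, h0]; simp
    rw [norm_mul]
    have a1 := hC ((1/2 : ℝ) • (r • e0) + (‖r • e0‖ / 2) • τ)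
    have a2 := hC ((1/2 : ℝ) • (r • e0) - (‖r • e0‖ / 2) • τ)
    rw [n1] at a1
    rw [n2] at a2
    refine (mul_le_mul a1 a2 (norm_nonneg _) ((norm_nonneg _).trans a1)).trans (le_of_eq ?_)
    rw [hn, hi]; ring
  have hsum : ∫ v, Lcol r v σ ∂F + ∫ v, Lcol r v (Jlin σ) ∂F + ∫ v, Lcol r v (Jlin (Jlin σ)) ∂F
      + ∫ v, Lcol r v (Jlin (Jlin (Jlin σ))) ∂F
      + ((r ^ 2 * (1 - σ 0 ^ 2) / 2 * (En F - 3 * Qf F e0) : ℝ) : ℂ)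
      = ∫ v, (Lcol r v σ + Lcol r v (Jlin σ) + Lcol r v (Jlin (Jlin σ)) + Lcol r v (Jlin (Jlin (Jlin σ)))
      + ((r ^ 2 * (1 - σ 0 ^ 2) / 2 * (‖v‖ ^ 2 - 3 * v 0 ^ 2) : ℝ) : ℂ)) ∂F := by
    have iq : Integrable (fun v : E3 => v 0 ^ 2) F := by
      simpa [he] using integrable_inner_sq h2 e0
    have ire : Integrable (fun v : E3 => r ^ 2 * (1 - σ 0 ^ 2) / 2 * (‖v‖ ^ 2 - 3 * v 0 ^ 2)) F :=
      (h2.sub (iq.const_mul 3)).const_mul _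
    have irc : Integrable (fun v : E3 =>
        ((r ^ 2 * (1 - σ 0 ^ 2) / 2 * (‖v‖ ^ 2 - 3 * v 0 ^ 2) : ℝ) : ℂ)) F := ire.ofReal
    rw [integral_add ((((iLcol _).fun_add (iLcol _)).fun_add (iLcol _)).fun_add (iLcol _)) irc,
      integral_add (((iLcol _).fun_add (iLcol _)).fun_add (iLcol _)) (iLcol _),
      integral_add ((iLcol _).fun_add (iLcol _)) (iLcol _), integral_add (iLcol _) (iLcol _)]
    congr 1
    have e := integral_ofReal (μ := F) (𝕜 := ℂ)
      (f := fun v : E3 => r ^ 2 * (1 - σ 0 ^ 2) / 2 * (‖v‖ ^ 2 - 3 * v 0 ^ 2))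
    refine Eq.trans ?_ e.symm
    rw [integral_const_mul, integral_sub h2 (iq.const_mul 3), integral_const_mul]
    unfold En Qf
    simp only [he]
    rfl
  have hmain : ‖∫ v, (Lcol r v σ + Lcol r v (Jlin σ) + Lcol r v (Jlin (Jlin σ)) + Lcol r v (Jlin (Jlin (Jlin σ)))
      + ((r ^ 2 * (1 - σ 0 ^ 2) / 2 * (‖v‖ ^ 2 - 3 * v 0 ^ 2) : ℝ) : ℂ)) ∂F‖
      ≤ 16 * (1 - σ 0 ^ 2) * r ^ 2 * Th F r := by
    unfold Th
    rw [← integral_const_mul]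
    refine norm_integral_le_of_norm_le ((integrable_Th h2 hr).const_mul _) ?_
    filter_upwards with v using Lcol_four hr v σ hσ
  rw [hPhi, hPhi, hPhi, hPhi]
  have q0 := hprod σ hσ rfl
  have q1 := hprod (Jlin σ) (by simp [Jlin_norm, hσ]) (by simp)
  have q2 := hprod (Jlin (Jlin σ)) (by simp [Jlin_norm, hσ]) (by simp)
  have q3 := hprod (Jlin (Jlin (Jlin σ))) (by simp [Jlin_norm, hσ]) (by simp)
  have := norm_add_le_of_le (norm_add_le_of_le (norm_add_le_of_le (norm_add_le_of_le hmain q0) q1) q2) q3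
  rw [← hsum] at this
  refine le_trans (le_of_eq ?_) (this.trans (le_of_eq ?_))
  · congr 1; ring
  · ring

/-- Surface measure pushed to the ambient space. -/
def nu : Measure E3 := sphμ.map Subtype.val

lemma embS : MeasurableEmbedding (Subtype.val : sphere (0 : E3) 1 → E3) :=
  MeasurableEmbedding.subtype_coe isClosed_sphere.measurableSet

open scoped Pointwise in
lemma nu_apply {A : Set E3} (hA : MeasurableSet A) :
    nu A = 3 * volume (Ioo (0:ℝ) 1 • (A ∩ sphere (0:E3) 1)) := by
  unfold nu sphμ
  rw [Measure.map_apply measurable_subtype_coe hA,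
    Measure.toSphere_apply' _ (measurable_subtype_coe hA), Subtype.image_preimage_coe, inter_comm]
  simp

open scoped Pointwise in
lemma nu_map (R : E3 ≃ₗᵢ[ℝ] E3) : MeasurePreserving R nu nu := by
  refine ⟨R.continuous.measurable, ?_⟩
  ext A hA
  rw [Measure.map_apply R.continuous.measurable hA, nu_apply (R.continuous.measurable hA), nu_apply hA]
  congr 1
  have : Ioo (0:ℝ) 1 • (R ⁻¹' A ∩ sphere (0:E3) 1) = R ⁻¹' (Ioo (0:ℝ) 1 • (A ∩ sphere (0:E3) 1)) := by
    ext x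
    simp only [Set.mem_smul, mem_preimage, mem_inter_iff, mem_sphere_zero_iff_norm]
    constructor
    · rintro ⟨a, ha, y, ⟨hy, hy1⟩, rfl⟩
      exact ⟨a, ha, R y, ⟨hy, by simpa using hy1⟩, by simp⟩
    · rintro ⟨a, ha, y, ⟨hy, hy1⟩, h⟩
      refine ⟨a, ha, R.symm y, ⟨by simpa using hy, by simpa using hy1⟩, ?_⟩
      apply R.injective
      simp [h]
  rw [this]
  exact (R.measurePreserving).measure_preimage_emb R.toHomeomorph.measurableEmbedding _

lemma embR (R : E3 ≃ₗᵢ[ℝ] E3) : MeasurableEmbedding R := R.toHomeomorph.measurableEmbedding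

lemma nu_ae : ∀ᵐ σ ∂nu, ‖σ‖ = 1 := by
  unfold nu
  rw [embS.ae_map_iff]
  filter_upwards with σ
  simpa using σ.2

/-- Collision integrand on the ambient space. -/
def kern (b : ℝ → ℝ) (F : Measure E3) (ξ σ : E3) : ℂ := (b (⟪ξ, σ⟫ / ‖ξ‖) : ℂ) * Phi F ξ σ

lemma kern_e0 (b : ℝ → ℝ) (F : Measure E3) {r : ℝ} (hr : 0 < r) (σ : E3) :
    kern b F (r • e0) σ = (b (σ 0) : ℂ) * Phi F (r • e0) σ := by
  have hn : ‖r • e0‖ = r := by rw [norm_smul, norm_e0, mul_one, Real.norm_eq_abs, abs_of_pos hr]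
  have he : ⟪r • e0, σ⟫ = r * σ 0 := by
    rw [inner_smul_left, inner3]; simp [e0_apply]
  unfold kern
  rw [hn, he, mul_div_cancel_left₀ _ hr.ne']

lemma four_int {b : ℝ → ℝ} {F : Measure E3} {r : ℝ} (hr : 0 < r)
    (hk : Integrable (kern b F (r • e0)) nu) :
    Integrable (fun σ => (b (σ 0) : ℂ) * (Phi F (r • e0) σ + Phi F (r • e0) (Jlin σ)
      + Phi F (r • e0) (Jlin (Jlin σ)) + Phi F (r • e0) (Jlin (Jlin (Jlin σ))))) nu ∧
    ∫ σ, (b (σ 0) : ℂ) * (Phi F (r • e0) σ + Phi F (r • e0) (Jlin σ)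
      + Phi F (r • e0) (Jlin (Jlin σ)) + Phi F (r • e0) (Jlin (Jlin (Jlin σ)))) ∂nu
      = 4 * ∫ σ, kern b F (r • e0) σ ∂nu := by
  have m1 := nu_map Jiso
  have hJ : ∀ f : E3 → ℂ, Integrable f nu → Integrable (fun σ => f (Jlin σ)) nu ∧
      ∫ σ, f (Jlin σ) ∂nu = ∫ σ, f σ ∂nu := by
    intro f hf
    exact ⟨m1.integrable_comp_of_integrable hf, m1.integral_comp (embR Jiso) f⟩
  obtain ⟨i1, q1⟩ := hJ _ hk
  obtain ⟨i2, q2⟩ := hJ _ i1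
  obtain ⟨i3, q3⟩ := hJ _ i2
  have heq : ∀ σ : E3, (b (σ 0) : ℂ) * (Phi F (r • e0) σ + Phi F (r • e0) (Jlin σ)
      + Phi F (r • e0) (Jlin (Jlin σ)) + Phi F (r • e0) (Jlin (Jlin (Jlin σ))))
      = kern b F (r • e0) σ + kern b F (r • e0) (Jlin σ) + kern b F (r • e0) (Jlin (Jlin σ))
        + kern b F (r • e0) (Jlin (Jlin (Jlin σ))) := by
    intro σ
    rw [kern_e0 b F hr, kern_e0 b F hr, kern_e0 b F hr, kern_e0 b F hr]
    simp only [Jlin_0]; ring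
  simp only [heq]
  refine ⟨((hk.add i1).add i2).add i3, ?_⟩
  rw [integral_add ((hk.fun_add i1).fun_add i2) i3, integral_add (hk.fun_add i1) i2, integral_add hk i1,
    q3, q2, q1]
  ring

lemma C1 {b : ℝ → ℝ} (hb0 : ∀ x, 0 ≤ b x) {F : Measure E3} [IsProbabilityMeasure F]
    (h2 : Integrable (fun v => ‖v‖ ^ 2) F)
    {C : ℝ} (hC : ∀ ξ, ‖charFn F ξ - 1‖ ≤ C * ‖ξ‖ ^ 2) {r : ℝ} (hr : 0 < r)
    (hk : Integrable (kern b F (r • e0)) nu)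
    (hA : Integrable (fun σ : E3 => b (σ 0) * (1 - σ 0 ^ 2)) nu) :
    ‖∫ σ, kern b F (r • e0) σ ∂nu
      + ((r ^ 2 / 8 * (∫ σ : E3, b (σ 0) * (1 - σ 0 ^ 2) ∂nu) * (En F - 3 * Qf F e0) : ℝ) : ℂ)‖
      ≤ (∫ σ : E3, b (σ 0) * (1 - σ 0 ^ 2) ∂nu) * (r ^ 2 / 4 * (16 * Th F r + C ^ 2 * r ^ 2)) := by
  obtain ⟨i, q⟩ := four_int hr hk
  set B := ∫ σ : E3, b (σ 0) * (1 - σ 0 ^ 2) ∂nu with hB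
  set K := r ^ 2 * (16 * Th F r + C ^ 2 * r ^ 2) with hK
  set S : E3 → ℂ := fun σ => Phi F (r • e0) σ + Phi F (r • e0) (Jlin σ)
      + Phi F (r • e0) (Jlin (Jlin σ)) + Phi F (r • e0) (Jlin (Jlin (Jlin σ))) with hS
  set D := r ^ 2 / 2 * (En F - 3 * Qf F e0) with hD
  have hAc : Integrable (fun σ : E3 => ((b (σ 0) * (1 - σ 0 ^ 2) : ℝ) : ℂ)) nu := hA.ofReal
  have e1 : ∫ σ, ((b (σ 0) : ℂ) * S σ + ((b (σ 0) * (1 - σ 0 ^ 2) : ℝ) : ℂ) * (D : ℂ)) ∂nu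
      = 4 * ∫ σ, kern b F (r • e0) σ ∂nu + (B : ℂ) * D := by
    rw [integral_add i (hAc.mul_const _), q, integral_mul_const, integral_complex_ofReal]
  have e2 : ‖∫ σ, ((b (σ 0) : ℂ) * S σ + ((b (σ 0) * (1 - σ 0 ^ 2) : ℝ) : ℂ) * (D : ℂ)) ∂nu‖
      ≤ B * K := by
    rw [hB, ← integral_mul_const]
    refine norm_integral_le_of_norm_le (hA.mul_const _) ?_
    filter_upwards [nu_ae] with σ hσ
    have k := key_lemma h2 hC hr.le hσ
    have : (b (σ 0) : ℂ) * S σ + ((b (σ 0) * (1 - σ 0 ^ 2) : ℝ) : ℂ) * (D : ℂ)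
        = (b (σ 0) : ℂ) * (S σ + ((r ^ 2 * (1 - σ 0 ^ 2) / 2 * (En F - 3 * Qf F e0) : ℝ) : ℂ)) := by
      rw [hD]; push_cast; ring
    rw [this, norm_mul, Complex.norm_real, Real.norm_eq_abs, abs_of_nonneg (hb0 _)]
    refine (mul_le_mul_of_nonneg_left k (hb0 _)).trans (le_of_eq ?_)
    rw [hK]; ring
  rw [e1] at e2
  have : 4 * ∫ σ, kern b F (r • e0) σ ∂nu + (B : ℂ) * D = 4 * (∫ σ, kern b F (r • e0) σ ∂nu
      + ((r ^ 2 / 8 * B * (En F - 3 * Qf F e0) : ℝ) : ℂ)) := by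
    rw [hD]; push_cast; ring
  rw [this, norm_mul] at e2
  have h4 : ‖(4:ℂ)‖ = 4 := by simp
  rw [h4] at e2
  rw [hK] at e2
  linarith

lemma C2 {b : ℝ → ℝ} (hbm : Measurable b) (hb0 : ∀ x, 0 ≤ b x) {F : Measure E3} [IsProbabilityMeasure F]
    (h2 : Integrable (fun v => ‖v‖ ^ 2) F)
    {C : ℝ} (hC : ∀ ξ, ‖charFn F ξ - 1‖ ≤ C * ‖ξ‖ ^ 2)
    (hk : ∀ r : ℝ, 0 < r → Integrable (kern b F (r • e0)) nu)
    (hA : ¬ Integrable (fun σ : E3 => b (σ 0) * (1 - σ 0 ^ 2)) nu) :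
    En F = 3 * Qf F e0 := by
  by_contra hne
  set D := En F - 3 * Qf F e0 with hD
  have hD0 : 0 < |D| := abs_pos.2 (sub_ne_zero.2 hne)
  have ht : Tendsto (fun r => 16 * Th F r + C ^ 2 * r ^ 2) (𝓝[>] 0) (𝓝 0) := by
    have t1 := (tendsto_Th h2).const_mul 16
    have t2 : Tendsto (fun r : ℝ => C ^ 2 * r ^ 2) (𝓝[>] 0) (𝓝 (C ^ 2 * 0 ^ 2)) :=
      (Continuous.tendsto (by fun_prop) 0).mono_left nhdsWithin_le_nhds
    simpa using t1.add t2
  obtain ⟨r, hr1, hr⟩ := ((ht.eventually (gt_mem_nhds (by positivity : (0:ℝ) < |D| / 4))).and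
    self_mem_nhdsWithin).exists
  have hr : 0 < r := hr
  obtain ⟨i, -⟩ := four_int hr (hk r hr)
  apply hA
  refine (i.norm.const_mul (4 / (r ^ 2 * |D|))).mono' ?_ ?_
  · refine Measurable.aestronglyMeasurable ?_
    have : Measurable (fun σ : E3 => σ 0) := by fun_prop
    exact (hbm.comp this).mul (measurable_const.sub (this.pow_const 2))
  · filter_upwards [nu_ae] with σ hσ
    have k := key_lemma h2 hC hr.le hσ
    have hs : σ 0 ^ 2 + σ 1 ^ 2 + σ 2 ^ 2 = 1 := by rw [← norm_sq3, hσ]; norm_num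
    have hs0 : 0 ≤ 1 - σ 0 ^ 2 := by nlinarith [sq_nonneg (σ 1), sq_nonneg (σ 2)]
    rw [Real.norm_eq_abs, abs_of_nonneg (mul_nonneg (hb0 _) hs0), norm_mul, Complex.norm_real,
      Real.norm_eq_abs, abs_of_nonneg (hb0 _)]
    set S := Phi F (r • e0) σ + Phi F (r • e0) (Jlin σ)
      + Phi F (r • e0) (Jlin (Jlin σ)) + Phi F (r • e0) (Jlin (Jlin (Jlin σ))) with hS
    have n1 : ‖((r ^ 2 * (1 - σ 0 ^ 2) / 2 * D : ℝ) : ℂ)‖ = r ^ 2 * (1 - σ 0 ^ 2) / 2 * |D| := by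
      rw [Complex.norm_real, Real.norm_eq_abs, abs_mul, abs_of_nonneg (by positivity)]
    have n2 : r ^ 2 * (1 - σ 0 ^ 2) / 2 * |D| ≤ ‖S + ((r ^ 2 * (1 - σ 0 ^ 2) / 2 * D : ℝ) : ℂ)‖ + ‖S‖ := by
      rw [← n1]
      have := norm_sub_le (S + ((r ^ 2 * (1 - σ 0 ^ 2) / 2 * D : ℝ) : ℂ)) S
      rwa [add_sub_cancel_left] at this
    have n3 : (1 - σ 0 ^ 2) * r ^ 2 * (16 * Th F r + C ^ 2 * r ^ 2) ≤ (1 - σ 0 ^ 2) * r ^ 2 * (|D| / 4) :=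
      mul_le_mul_of_nonneg_left hr1.le (by positivity)
    have n4 : (1 - σ 0 ^ 2) * (r ^ 2 * |D|) / 4 ≤ ‖S‖ := by linarith
    have n5 : 1 - σ 0 ^ 2 ≤ 4 / (r ^ 2 * |D|) * ‖S‖ := by
      rw [div_mul_eq_mul_div, le_div_iff₀ (by positivity)]; linarith
    calc _ ≤ b (σ 0) * (4 / (r ^ 2 * |D|) * ‖S‖) := mul_le_mul_of_nonneg_left n5 (hb0 _)
      _ = _ := by ring

section transport
variable (F : Measure E3) (R : E3 ≃ₗᵢ[ℝ] E3)

lemma int_map {V : Type*} [NormedAddCommGroup V] [NormedSpace ℝ V] (f : E3 → V) :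
    ∫ v, f v ∂(F.map R.symm) = ∫ v, f (R.symm v) ∂F := (embR R.symm).integral_map f

lemma inner_symm (v ξ : E3) : ⟪R.symm v, ξ⟫ = ⟪v, R ξ⟫ := by
  rw [← R.inner_map_map, R.apply_symm_apply]

lemma charFn_map (ξ : E3) : charFn (F.map R.symm) ξ = charFn F (R ξ) := by
  unfold charFn; rw [int_map]; simp only [inner_symm]

lemma En_map : En (F.map R.symm) = En F := by unfold En; rw [int_map]; simp

lemma Th_map (r : ℝ) : Th (F.map R.symm) r = Th F r := by unfold Th; rw [int_map]; simp

lemma Qf_map (e : E3) : Qf (F.map R.symm) e = Qf F (R e) := by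
  unfold Qf; rw [int_map]; simp only [inner_symm]

lemma kern_map (b : ℝ → ℝ) (ξ σ : E3) : kern b (F.map R.symm) ξ σ = kern b F (R ξ) (R σ) := by
  unfold kern Phi
  simp only [charFn_map, map_add, map_sub, map_smul, R.norm_map, R.inner_map_map]

lemma kern_int_map (b : ℝ → ℝ) (ξ : E3) (h : Integrable (kern b F (R ξ)) nu) :
    Integrable (kern b (F.map R.symm) ξ) nu ∧
    ∫ σ, kern b (F.map R.symm) ξ σ ∂nu = ∫ σ, kern b F (R ξ) σ ∂nu := by
  have : kern b (F.map R.symm) ξ = fun σ => kern b F (R ξ) (R σ) := funext (kern_map F R b ξ)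
  rw [this]
  exact ⟨(nu_map R).integrable_comp_of_integrable h, (nu_map R).integral_comp (embR R) _⟩

end transport

lemma exists_rot {e : E3} (he : ‖e‖ = 1) : ∃ R : E3 ≃ₗᵢ[ℝ] E3, R e0 = e :=
  ⟨_, Submodule.reflection_sub (by rw [norm_e0, he])⟩

lemma C1' {b : ℝ → ℝ} (hb0 : ∀ x, 0 ≤ b x) {F : Measure E3} [IsProbabilityMeasure F]
    (h2 : Integrable (fun v => ‖v‖ ^ 2) F)
    {C : ℝ} (hC : ∀ ξ, ‖charFn F ξ - 1‖ ≤ C * ‖ξ‖ ^ 2) {r : ℝ} (hr : 0 < r) {e : E3} (he : ‖e‖ = 1)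
    (hk : Integrable (kern b F (r • e)) nu)
    (hA : Integrable (fun σ : E3 => b (σ 0) * (1 - σ 0 ^ 2)) nu) :
    ‖∫ σ, kern b F (r • e) σ ∂nu
      + ((r ^ 2 / 8 * (∫ σ : E3, b (σ 0) * (1 - σ 0 ^ 2) ∂nu) * (En F - 3 * Qf F e) : ℝ) : ℂ)‖
      ≤ (∫ σ : E3, b (σ 0) * (1 - σ 0 ^ 2) ∂nu) * (r ^ 2 / 4 * (16 * Th F r + C ^ 2 * r ^ 2)) := by
  obtain ⟨R, rfl⟩ := exists_rot he
  rw [← map_smul] at hk ⊢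
  obtain ⟨i, q⟩ := kern_int_map F R b (r • e0) hk
  haveI : IsProbabilityMeasure (F.map R.symm) :=
    Measure.isProbabilityMeasure_map R.symm.continuous.measurable.aemeasurable
  have := C1 (F := F.map R.symm) hb0 ((embR R.symm).integrable_map_iff.2 (by simpa [Function.comp_def] using h2))
    (C := C) (fun ξ => by simpa [charFn_map] using hC (R ξ)) hr i hA
  rwa [q, En_map, Th_map, Qf_map] at this

lemma C2' {b : ℝ → ℝ} (hbm : Measurable b) (hb0 : ∀ x, 0 ≤ b x) {F : Measure E3} [IsProbabilityMeasure F]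
    (h2 : Integrable (fun v => ‖v‖ ^ 2) F)
    {C : ℝ} (hC : ∀ ξ, ‖charFn F ξ - 1‖ ≤ C * ‖ξ‖ ^ 2)
    (hk : ∀ ξ, Integrable (kern b F ξ) nu)
    (hA : ¬ Integrable (fun σ : E3 => b (σ 0) * (1 - σ 0 ^ 2)) nu) {e : E3} (he : ‖e‖ = 1) :
    En F = 3 * Qf F e := by
  obtain ⟨R, rfl⟩ := exists_rot he
  haveI : IsProbabilityMeasure (F.map R.symm) :=
    Measure.isProbabilityMeasure_map R.symm.continuous.measurable.aemeasurable
  have := C2 (F := F.map R.symm) hbm hb0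
    ((embR R.symm).integrable_map_iff.2 (by simpa [Function.comp_def] using h2))
    (C := C) (fun ξ => by simpa [charFn_map] using hC (R ξ))
    (fun r _ => (kern_int_map F R b (r • e0) (hk _)).1) hA
  rwa [En_map, Qf_map] at this


/-- Basis vectors. -/
def ei (i : Fin 3) : E3 := EuclideanSpace.single i 1

lemma norm_ei (i : Fin 3) : ‖ei i‖ = 1 := by simp [ei]

lemma inner_ei (v : E3) (i : Fin 3) : ⟪v, ei i⟫ = v i := by
  simp [ei, EuclideanSpace.inner_single_right]

lemma tendsto_cos_quot (a : ℝ) :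
    Tendsto (fun r : ℝ => 2 * (1 - Real.cos (r * a)) / r ^ 2) (𝓝[>] 0) (𝓝 (a ^ 2)) := by
  have h : HasDerivAt (fun r : ℝ => Real.sin (r * (a / 2))) (Real.cos (0 * (a / 2)) * (1 * (a / 2))) 0 :=
    ((hasDerivAt_id (0:ℝ)).mul_const (a / 2)).sin
  have t := ((h.tendsto_slope_zero_right).const_mul 2).pow 2
  have e : (2 * (Real.cos (0 * (a / 2)) * (1 * (a / 2)))) ^ 2 = a ^ 2 := by simp; ring
  rw [e] at t
  refine t.congr' ?_
  filter_upwards [self_mem_nhdsWithin] with r hr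
  have hr : 0 < r := hr
  have hc : Real.cos (r * a) = 1 - 2 * Real.sin (r * (a / 2)) ^ 2 := by
    have := Real.cos_two_mul (r * (a / 2))
    rw [show 2 * (r * (a / 2)) = r * a by ring] at this
    rw [this, Real.sin_sq]; ring
  simp only [zero_add, zero_mul, Real.sin_zero, sub_zero, smul_eq_mul]
  rw [hc]; field_simp; ring

lemma re_charFn (F : Measure E3) [IsProbabilityMeasure F] (ξ : E3) :
    (charFn F ξ).re = ∫ v, Real.cos ⟪v, ξ⟫ ∂F := by
  have := (Complex.reCLM.integral_comp_comm (integrable_expR F ξ)).symm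
  simp only [Complex.reCLM_apply] at this
  unfold charFn
  rw [this]
  congr 1; ext v
  rw [show -(Complex.I * (⟪v, ξ⟫ : ℂ)) = ((-⟪v, ξ⟫ : ℝ) : ℂ) * Complex.I by push_cast; ring,
    Complex.exp_ofReal_mul_I_re, Real.cos_neg]

lemma dir_mom {F : Measure E3} [IsProbabilityMeasure F] {C : ℝ}
    (hC : ∀ ξ, ‖charFn F ξ - 1‖ ≤ C * ‖ξ‖ ^ 2) {e : E3} (he : ‖e‖ = 1) :
    ∫⁻ v, ENNReal.ofReal (⟪v, e⟫ ^ 2) ∂F ≤ ENNReal.ofReal (2 * C) := by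
  set f : ℕ → E3 → ENNReal := fun n v =>
    ENNReal.ofReal (2 * (1 - Real.cos ((1 / ((n:ℝ) + 1)) * ⟪v, e⟫)) / (1 / ((n:ℝ) + 1)) ^ 2) with hf
  have ht : Tendsto (fun n : ℕ => 1 / ((n:ℝ) + 1)) atTop (𝓝[>] 0) := by
    refine tendsto_nhdsWithin_iff.2 ⟨tendsto_one_div_add_atTop_nhds_zero_nat, ?_⟩
    filter_upwards with n
    exact mem_Ioi.2 (by positivity)
  have hl : ∀ v : E3, liminf (fun n => f n v) atTop = ENNReal.ofReal (⟪v, e⟫ ^ 2) := by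
    intro v
    apply Tendsto.liminf_eq
    exact ENNReal.tendsto_ofReal ((tendsto_cos_quot ⟪v, e⟫).comp ht)
  have hb : ∀ n, ∫⁻ v, f n v ∂F ≤ ENNReal.ofReal (2 * C) := by
    intro n
    set r : ℝ := 1 / ((n:ℝ) + 1) with hr
    have hr0 : 0 < r := by positivity
    have hi : Integrable (fun v : E3 => Real.cos (r * ⟪v, e⟫)) F := by
      refine Integrable.of_bound (C := 1) (Continuous.aestronglyMeasurable (by fun_prop)) ?_
      filter_upwards with v using Real.abs_cos_le_one _
    have hi1 : Integrable (fun v : E3 => 1 - Real.cos (r * ⟪v, e⟫)) F := (integrable_const 1).sub hi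
    have hi2 : Integrable (fun v : E3 => 2 * (1 - Real.cos (r * ⟪v, e⟫)) / r ^ 2) F :=
      (hi1.const_mul 2).div_const _
    rw [hf]
    simp only
    rw [← ofReal_integral_eq_lintegral_ofReal hi2]
    · apply ENNReal.ofReal_le_ofReal
      rw [integral_div, integral_const_mul, integral_sub (integrable_const 1) hi]
      have h1 : ∫ v : E3, Real.cos (r * ⟪v, e⟫) ∂F = (charFn F (r • e)).re := by
        rw [re_charFn]; simp [inner_smul_right]
      rw [h1]
      have h2 := hC (r • e)
      rw [norm_smul, he, mul_one, Real.norm_eq_abs, sq_abs] at h2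
      have h3 := (abs_le.1 ((Complex.abs_re_le_norm _).trans h2)).1
      simp only [Complex.sub_re, Complex.one_re] at h3
      rw [div_le_iff₀ (by positivity)]
      simp
      nlinarith
    · filter_upwards with v
      have := Real.cos_le_one (r * ⟪v, e⟫)
      simp only [Pi.zero_apply]
      apply div_nonneg _ (sq_nonneg _)
      linarith
  calc ∫⁻ v, ENNReal.ofReal (⟪v, e⟫ ^ 2) ∂F = ∫⁻ v, liminf (fun n => f n v) atTop ∂F := by
        simp only [hl]
    _ ≤ liminf (fun n => ∫⁻ v, f n v ∂F) atTop := by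
        refine lintegral_liminf_le fun n => ?_
        rw [hf]
        exact ENNReal.measurable_ofReal.comp (Continuous.measurable (by fun_prop))
    _ ≤ ENNReal.ofReal (2 * C) := by
        refine liminf_le_of_frequently_le' ?_
        exact Frequently.of_forall hb

lemma C_nonneg {F : Measure E3} {C : ℝ}
    (hC : ∀ ξ, ‖charFn F ξ - 1‖ ≤ C * ‖ξ‖ ^ 2) : 0 ≤ C := by
  have := (norm_nonneg _).trans (hC e0)
  rw [norm_e0] at this; simpa using this

lemma mom {F : Measure E3} [IsProbabilityMeasure F] {C : ℝ}
    (hC : ∀ ξ, ‖charFn F ξ - 1‖ ≤ C * ‖ξ‖ ^ 2) :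
    Integrable (fun v : E3 => ‖v‖ ^ 2) F ∧ En F ≤ 6 * C := by
  have hC0 := C_nonneg hC
  have h : ∫⁻ v : E3, ENNReal.ofReal (‖v‖ ^ 2) ∂F ≤ ENNReal.ofReal (6 * C) := by
    have h3 : ∀ v : E3, ENNReal.ofReal (‖v‖ ^ 2) = ENNReal.ofReal (⟪v, ei 0⟫ ^ 2)
        + ENNReal.ofReal (⟪v, ei 1⟫ ^ 2) + ENNReal.ofReal (⟪v, ei 2⟫ ^ 2) := by
      intro v
      rw [← ENNReal.ofReal_add (by positivity) (by positivity),
        ← ENNReal.ofReal_add (by positivity) (by positivity), inner_ei, inner_ei, inner_ei, norm_sq3]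
    simp only [h3]
    have hm : ∀ i, Measurable fun v : E3 => ENNReal.ofReal (⟪v, ei i⟫ ^ 2) := fun i =>
      ENNReal.measurable_ofReal.comp (Continuous.measurable (by fun_prop))
    rw [lintegral_add_right _ (hm 2), lintegral_add_right _ (hm 1)]
    have := add_le_add (add_le_add (dir_mom hC (norm_ei 0)) (dir_mom hC (norm_ei 1)))
      (dir_mom hC (norm_ei 2))
    refine this.trans (le_of_eq ?_)
    rw [← ENNReal.ofReal_add (by positivity) (by positivity),
        ← ENNReal.ofReal_add (by positivity) (by positivity)]
    congr 1; ring
  have hm : AEStronglyMeasurable (fun v : E3 => ‖v‖ ^ 2) F := Continuous.aestronglyMeasurable (by fun_prop)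
  have hn : 0 ≤ᵐ[F] fun v : E3 => ‖v‖ ^ 2 := by filter_upwards with v using sq_nonneg _
  refine ⟨⟨hm, ?_⟩, ?_⟩
  · rw [hasFiniteIntegral_iff_ofReal hn]
    exact h.trans_lt ENNReal.ofReal_lt_top
  · unfold En
    rw [integral_eq_lintegral_of_nonneg_ae hn hm]
    exact ENNReal.toReal_le_of_le_ofReal (by positivity) h

lemma En_lint {F : Measure E3} (h2 : Integrable (fun v : E3 => ‖v‖ ^ 2) F) :
    ∫⁻ v, ENNReal.ofReal (‖v‖ ^ 2) ∂F = ENNReal.ofReal (En F) := by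
  unfold En
  rw [ofReal_integral_eq_lintegral_ofReal h2]
  filter_upwards with v using sq_nonneg _

lemma En_eq_sum {F : Measure E3} (h2 : Integrable (fun v => ‖v‖ ^ 2) F) :
    En F = Qf F (ei 0) + Qf F (ei 1) + Qf F (ei 2) := by
  unfold Qf En
  have i := fun k => integrable_inner_sq h2 (ei k)
  rw [← integral_add (i 0) (i 1), ← integral_add ((i 0).fun_add (i 1)) (i 2)]
  congr 1; ext v
  rw [inner_ei, inner_ei, inner_ei, norm_sq3]

lemma Qf_smul (F : Measure E3) (r : ℝ) (e : E3) : Qf F (r • e) = r ^ 2 * Qf F e := by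
  unfold Qf
  rw [← integral_const_mul]
  congr 1; ext v; rw [inner_smul_right]; ring

lemma KBdd_sq {F : Measure E3} [IsProbabilityMeasure F] (h : KBdd 2 (charFn F)) :
    ∃ C, ∀ ξ, ‖charFn F ξ - 1‖ ≤ C * ‖ξ‖ ^ 2 := by
  obtain ⟨C, hC⟩ := h
  refine ⟨C, fun ξ => ?_⟩
  by_cases h0 : ξ = 0
  · subst h0; simp [charFn_zero]
  · have := hC ξ h0
    rwa [Real.rpow_two] at this

lemma kern_eq {b : ℝ → ℝ} {ψ : ℝ → E3 → ℂ} {F : ℝ → Measure E3} {t : ℝ} (h : ψ t = charFn (F t))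
    (ξ : E3) : bobylevIntegrand b ψ t ξ = fun σ : sphere (0 : E3) 1 => kern b (F t) ξ (σ : E3) := by
  ext σ
  unfold bobylevIntegrand kern Phi xiPlus xiMinus
  rw [h]

lemma kern_int {b : ℝ → ℝ} {ψ : ℝ → E3 → ℂ} {F : ℝ → Measure E3} {t : ℝ} (h : ψ t = charFn (F t))
    (ξ : E3) (hi : Integrable (bobylevIntegrand b ψ t ξ) sphμ) :
    Integrable (kern b (F t) ξ) nu ∧
    ∫ σ, bobylevIntegrand b ψ t ξ σ ∂sphμ = ∫ σ, kern b (F t) ξ σ ∂nu := by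
  rw [kern_eq h] at hi ⊢
  unfold nu
  exact ⟨embS.integrable_map_iff.2 hi, (embS.integral_map _).symm⟩

lemma Kdist_bound {φ φ' : E3 → ℂ} (h : KBdd 2 φ) (h' : KBdd 2 φ') (hd : Kdist 2 φ φ' < 1)
    {ξ : E3} (hξ : ξ ≠ 0) : ‖φ ξ - φ' ξ‖ ≤ ‖ξ‖ ^ 2 := by
  obtain ⟨C, hC⟩ := h
  obtain ⟨C', hC'⟩ := h'
  have hb : BddAbove (range fun ξ : {ξ : E3 // ξ ≠ 0} => ‖φ ξ.1 - φ' ξ.1‖ / ‖(ξ.1 : E3)‖ ^ (2:ℝ)) := by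
    refine ⟨C + C', ?_⟩
    rintro _ ⟨⟨η, hη⟩, rfl⟩
    have hp : 0 < ‖η‖ ^ (2:ℝ) := Real.rpow_pos_of_pos (norm_pos_iff.2 hη) _
    simp only
    rw [div_le_iff₀ hp]
    have := norm_sub_le (φ η - 1) (φ' η - 1)
    rw [sub_sub_sub_cancel_right] at this
    linarith [hC η hη, hC' η hη]
  have := (le_ciSup hb ⟨ξ, hξ⟩).trans hd.le
  simp only at this
  have hp : 0 < ‖ξ‖ ^ (2:ℝ) := Real.rpow_pos_of_pos (norm_pos_iff.2 hξ) _
  rw [div_le_iff₀ hp, one_mul, Real.rpow_two] at this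
  exact this

lemma unif_C {F : ℝ → Measure E3} (hFprob : ∀ t, IsProbabilityMeasure (F t))
    {ψ : ℝ → E3 → ℂ} (hψch : ∀ t ≥ 0, ψ t = charFn (F t))
    (hψK : ∀ t ≥ 0, KBdd 2 (ψ t)) (hψc : KContinuous 2 ψ) (t : ℝ) :
    ∃ C, ∀ s ∈ Icc 0 t, ∀ ξ, ‖charFn (F s) ξ - 1‖ ≤ C * ‖ξ‖ ^ 2 := by
  refine (isCompact_Icc (a := (0:ℝ)) (b := t)).induction_on
    (p := fun S => ∃ C, ∀ s ∈ S ∩ Ici 0, ∀ ξ, ‖charFn (F s) ξ - 1‖ ≤ C * ‖ξ‖ ^ 2) ?_ ?_ ?_ ?_ |>.imp ?_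
  · exact ⟨0, by simp⟩
  · rintro s u hsu ⟨C, hC⟩
    exact ⟨C, fun x hx => hC x ⟨hsu hx.1, hx.2⟩⟩
  · rintro s u ⟨C, hC⟩ ⟨D, hD⟩
    refine ⟨max C D, fun x hx ξ => ?_⟩
    rcases hx.1 with h | h
    · exact (hC x ⟨h, hx.2⟩ ξ).trans (by gcongr; exact le_max_left _ _)
    · exact (hD x ⟨h, hx.2⟩ ξ).trans (by gcongr; exact le_max_right _ _)
  · intro x hx
    have h1 := (hψc x hx.1).eventually (gt_mem_nhds (zero_lt_one (α := ℝ)))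
    have hx' := hψK x hx.1
    rw [hψch x hx.1] at hx'
    obtain ⟨C, hC⟩ := KBdd_sq hx'
    refine ⟨_, nhdsWithin_mono x Icc_subset_Ici_self h1, C + 1, ?_⟩
    rintro s ⟨hs, hs0⟩ ξ
    by_cases h0 : ξ = 0
    · subst h0; simp [charFn_zero]
    have := Kdist_bound (hψK s hs0) (hψK x hx.1) hs h0
    rw [hψch x hx.1, hψch s hs0] at this
    have h4 := norm_add_le (charFn (F s) ξ - charFn (F x) ξ) (charFn (F x) ξ - 1)
    rw [sub_add_sub_cancel] at h4
    linarith [hC ξ]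
  · intro C hC s hs
    exact hC s ⟨hs, hs.1⟩


lemma star {b : ℝ → ℝ} (hbm : Measurable b) (hb0 : ∀ x, 0 ≤ b x) {F : Measure E3}
    (hk : ∀ ξ, Integrable (kern b F ξ) nu)
    (hA : ¬ Integrable (fun σ : E3 => b (σ 0) * (1 - σ 0 ^ 2)) nu) {ξ : E3} (hξ : ξ ≠ 0)
    {ε : ℝ} (hε : 0 < ε) :
    ∃ σ : E3, ‖σ‖ = 1 ∧ (⟪ξ, σ⟫ / ‖ξ‖) ^ 2 < 1 ∧ ‖Phi F ξ σ‖ ≤ ε * (1 - (⟪ξ, σ⟫ / ‖ξ‖) ^ 2) := by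
  by_contra! hcon
  apply hA
  have hn : 0 < ‖ξ‖ := norm_pos_iff.2 hξ
  obtain ⟨R, hR⟩ := exists_rot (e := ‖ξ‖⁻¹ • ξ) (by rw [norm_smul]; simp [hn.ne'])
  have hξR : ξ = ‖ξ‖ • R e0 := by rw [hR, smul_smul, mul_inv_cancel₀ hn.ne', one_smul]
  have hc : ∀ σ, ⟪ξ, R σ⟫ / ‖ξ‖ = σ 0 := by
    intro σ
    have : ⟪ξ, R σ⟫ = ‖ξ‖ * σ 0 := by
      conv_lhs => rw [hξR]
      rw [inner_smul_left, R.inner_map_map, inner3]; simp [e0_apply]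
    rw [this, mul_div_cancel_left₀ _ hn.ne']
  have hi : Integrable (fun σ => kern b F ξ (R σ)) nu := (nu_map R).integrable_comp_of_integrable (hk ξ)
  refine (hi.norm.const_mul ε⁻¹).mono' ?_ ?_
  · refine Measurable.aestronglyMeasurable ?_
    have : Measurable (fun σ : E3 => σ 0) := by fun_prop
    exact (hbm.comp this).mul (measurable_const.sub (this.pow_const 2))
  · filter_upwards [nu_ae] with σ hσ
    have hs : σ 0 ^ 2 + σ 1 ^ 2 + σ 2 ^ 2 = 1 := by rw [← norm_sq3, hσ]; norm_num
    have hs0 : 0 ≤ 1 - σ 0 ^ 2 := by nlinarith [sq_nonneg (σ 1), sq_nonneg (σ 2)]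
    rw [Real.norm_eq_abs, abs_of_nonneg (mul_nonneg (hb0 _) hs0)]
    unfold kern
    rw [hc, norm_mul, Complex.norm_real, Real.norm_eq_abs, abs_of_nonneg (hb0 _)]
    have hP : 1 - σ 0 ^ 2 ≤ ε⁻¹ * ‖Phi F ξ (R σ)‖ := by
      rcases hs0.eq_or_lt with h | h
      · rw [← h]; positivity
      · have := hcon (R σ) (by simpa using hσ) (by rw [hc]; linarith)
        rw [hc] at this
        rw [inv_mul_eq_div, le_div_iff₀ hε]; linarith
    calc _ ≤ b (σ 0) * (ε⁻¹ * ‖Phi F ξ (R σ)‖) := mul_le_mul_of_nonneg_left hP (hb0 _)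
      _ = _ := by ring

lemma mean_zero {F : Measure E3} [IsProbabilityMeasure F] {C : ℝ}
    (hC : ∀ ξ, ‖charFn F ξ - 1‖ ≤ C * ‖ξ‖ ^ 2) (ξ : E3) : ∫ v, ⟪v, ξ⟫ ∂F = 0 := by
  obtain ⟨h2, -⟩ := mom hC
  set m := ∫ v, ⟪v, ξ⟫ ∂F with hm
  set D := C * ‖ξ‖ ^ 2 + |Qf F ξ| / 2 + 2 * ‖ξ‖ ^ 2 * En F with hD
  have key : ∀ r : ℝ, 0 < r → |m| ≤ r * D := by
    intro r hr
    have h := charFn_expand h2 (r • ξ)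
    have hmr : ∫ v, ⟪v, r • ξ⟫ ∂F = r * m := by
      rw [hm, ← integral_const_mul]; simp only [inner_smul_right]
    rw [hmr, Qf_smul] at h
    have hnr : ‖r • ξ‖ = r * ‖ξ‖ := by rw [norm_smul, Real.norm_eq_abs, abs_of_pos hr]
    have hc := hC (r • ξ)
    have hT := Th_le h2 (norm_nonneg (r • ξ))
    rw [hnr] at h hc hT
    have e : Complex.I * ((r * m : ℝ) : ℂ) = (charFn F (r • ξ) - 1 + Complex.I * ((r * m : ℝ) : ℂ)
      + ((r ^ 2 * Qf F ξ : ℝ) : ℂ) / 2) - (charFn F (r • ξ) - 1) - (((r ^ 2 * Qf F ξ / 2 : ℝ)) : ℂ) := by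
      push_cast; ring
    have n1 : ‖Complex.I * ((r * m : ℝ) : ℂ)‖ = r * |m| := by
      rw [norm_mul, Complex.norm_I, one_mul, Complex.norm_real, Real.norm_eq_abs, abs_mul, abs_of_pos hr]
    have n2 : ‖(((r ^ 2 * Qf F ξ / 2 : ℝ)) : ℂ)‖ = r ^ 2 * (|Qf F ξ| / 2) := by
      rw [Complex.norm_real, Real.norm_eq_abs, abs_div, abs_mul, abs_of_pos (by positivity : 0 < r ^ 2)]
      simp; ring
    have n3 := (norm_sub_le ((charFn F (r • ξ) - 1 + Complex.I * ((r * m : ℝ) : ℂ)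
      + ((r ^ 2 * Qf F ξ : ℝ) : ℂ) / 2) - (charFn F (r • ξ) - 1)) (((r ^ 2 * Qf F ξ / 2 : ℝ)) : ℂ))
    rw [← e, n1, n2] at n3
    have n4 := norm_sub_le (charFn F (r • ξ) - 1 + Complex.I * ((r * m : ℝ) : ℂ)
      + ((r ^ 2 * Qf F ξ : ℝ) : ℂ) / 2) (charFn F (r • ξ) - 1)
    have n5 : 2 * (r * ‖ξ‖) ^ 2 * Th F (r * ‖ξ‖) ≤ 2 * (r * ‖ξ‖) ^ 2 * En F :=
      mul_le_mul_of_nonneg_left hT (by positivity)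
    have : r * |m| ≤ r * (r * D) := by rw [hD]; nlinarith
    exact le_of_mul_le_mul_left this hr
  have : |m| ≤ 0 := by
    have ht : Tendsto (fun r : ℝ => r * D) (𝓝[>] 0) (𝓝 (0 * D)) :=
      (Continuous.tendsto (by fun_prop) 0).mono_left nhdsWithin_le_nhds
    rw [zero_mul] at ht
    refine ge_of_tendsto ht ?_
    filter_upwards [self_mem_nhdsWithin] with r hr using key r hr
  exact abs_nonpos_iff.1 this

lemma gauss {F : Measure E3} [IsProbabilityMeasure F] {C : ℝ}
    (hC : ∀ ξ, ‖charFn F ξ - 1‖ ≤ C * ‖ξ‖ ^ 2) {q : ℝ} (hq0 : 0 ≤ q)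
    (hq : ∀ ξ, Qf F ξ = q * ‖ξ‖ ^ 2)
    (hs : ∀ ξ : E3, ξ ≠ 0 → ∀ ε : ℝ, 0 < ε → ∃ σ : E3, ‖σ‖ = 1 ∧ (⟪ξ, σ⟫ / ‖ξ‖) ^ 2 < 1 ∧
      ‖Phi F ξ σ‖ ≤ ε * (1 - (⟪ξ, σ⟫ / ‖ξ‖) ^ 2)) (ξ₀ : E3) :
    charFn F ξ₀ = ((Real.exp (-(q / 2 * ‖ξ₀‖ ^ 2)) : ℝ) : ℂ) := by
  obtain ⟨h2, -⟩ := mom hC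
  set g : E3 → ℂ := fun ξ => ((Real.exp (-(q / 2 * ‖ξ‖ ^ 2)) : ℝ) : ℂ) with hg
  have hg1 : ∀ ξ, ‖g ξ‖ ≤ 1 := by
    intro ξ
    rw [hg]; simp only
    rw [Complex.norm_real, Real.norm_eq_abs, Real.abs_exp, Real.exp_le_one_iff]
    simp; positivity
  have hgc : Continuous g := by rw [hg]; fun_prop
  set u : E3 → ℝ := fun ξ => ‖charFn F ξ - g ξ‖ with hu
  have huc : Continuous u := ((continuous_charFn F).sub hgc).norm
  have hu0 : u 0 = 0 := by simp [hu, hg, charFn_zero]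
  have hlim : Tendsto (fun ξ => u ξ / ‖ξ‖ ^ 2) (𝓝[≠] 0) (𝓝 0) := by
    have t1 : Tendsto (fun ξ : E3 => 2 * Th F ‖ξ‖) (𝓝[≠] 0) (𝓝 (2 * 0)) :=
      ((tendsto_Th h2).comp tendsto_norm_nhdsNE_zero).const_mul 2
    have t2 : Tendsto (fun ξ : E3 => (q / 2) ^ 2 * ‖ξ‖ ^ 2) (𝓝[≠] 0) (𝓝 ((q / 2) ^ 2 * ‖(0:E3)‖ ^ 2)) :=
      (Continuous.tendsto (by fun_prop) 0).mono_left nhdsWithin_le_nhds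
    have t3 : Tendsto (fun ξ : E3 => q / 2 * ‖ξ‖ ^ 2) (𝓝[≠] 0) (𝓝 (q / 2 * ‖(0:E3)‖ ^ 2)) :=
      (Continuous.tendsto (by fun_prop) 0).mono_left nhdsWithin_le_nhds
    have t := t1.add t2
    simp only [norm_zero, mul_zero, ne_eq, OfNat.ofNat_ne_zero, not_false_eq_true, zero_pow, add_zero] at t t3
    refine tendsto_of_tendsto_of_tendsto_of_le_of_le' tendsto_const_nhds t ?_ ?_
    · filter_upwards with ξ; rw [hu]; positivity
    · filter_upwards [self_mem_nhdsWithin, t3.eventually (gt_mem_nhds zero_lt_one)] with ξ hξ h1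
      have hn : 0 < ‖ξ‖ := norm_pos_iff.2 hξ
      rw [div_le_iff₀ (by positivity)]
      have a1 := charFn_expand h2 ξ
      rw [mean_zero hC, hq] at a1
      have a2 := Real.abs_exp_sub_one_sub_id_le (x := -(q / 2 * ‖ξ‖ ^ 2))
        (by rw [abs_neg, abs_of_nonneg (by positivity)]; exact h1.le)
      have e : charFn F ξ - g ξ = (charFn F ξ - 1 + Complex.I * ((0 : ℝ) : ℂ)
          + ((q * ‖ξ‖ ^ 2 : ℝ) : ℂ) / 2)
          - ((Real.exp (-(q / 2 * ‖ξ‖ ^ 2)) - 1 - -(q / 2 * ‖ξ‖ ^ 2) : ℝ) : ℂ) := by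
        rw [hg]; push_cast; ring
      have n := norm_sub_le (charFn F ξ - 1 + Complex.I * ((0 : ℝ) : ℂ)
          + ((q * ‖ξ‖ ^ 2 : ℝ) : ℂ) / 2)
          ((Real.exp (-(q / 2 * ‖ξ‖ ^ 2)) - 1 - -(q / 2 * ‖ξ‖ ^ 2) : ℝ) : ℂ)
      rw [← e, Complex.norm_real, Real.norm_eq_abs] at n
      rw [hu]
      nlinarith
  have main : ∀ δ : ℝ, 0 < δ → u ξ₀ ≤ δ * ‖ξ₀‖ ^ 4 := by
    intro δ hδ
    set K : E3 → ℝ := fun ξ => u ξ / ‖ξ‖ ^ 2 - δ * ‖ξ‖ ^ 2 with hK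
    have hKc : Continuous K := by
      rw [continuous_iff_continuousAt]
      intro x
      by_cases hx : x = 0
      · subst hx
        refine ContinuousAt.sub ?_ (Continuous.continuousAt (by fun_prop))
        rw [continuousAt_iff_punctured_nhds]
        simpa [hu0] using hlim
      · refine ContinuousAt.sub ?_ (Continuous.continuousAt (by fun_prop))
        refine ContinuousAt.div huc.continuousAt (Continuous.continuousAt (by fun_prop)) ?_
        have := norm_pos_iff.2 hx
        positivity
    have hKv : ∀ η, ‖η‖ ^ 2 * K η = u η - δ * ‖η‖ ^ 4 := by
      intro η
      by_cases hη : η = 0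
      · subst hη; simp [hu0]
      · have := norm_pos_iff.2 hη
        rw [hK]; simp only; field_simp
    obtain ⟨ξ, hξm, hmax⟩ := (isCompact_closedBall (0:E3) ‖ξ₀‖).exists_isMaxOn
      ⟨0, by simp⟩ hKc.continuousOn
    have hξ0 : ξ = 0 := by
      by_contra hξ
      have hn : 0 < ‖ξ‖ := norm_pos_iff.2 hξ
      obtain ⟨σ, hσ, hc1, hP⟩ := hs ξ hξ (δ * ‖ξ‖ ^ 4 / 4) (by positivity)
      obtain ⟨p1, p2⟩ := norm_sq_pm (ξ := ξ) hσ
      have hin : ⟪ξ, σ⟫ = ‖ξ‖ * (⟪ξ, σ⟫ / ‖ξ‖) := by field_simp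
      set c := ⟪ξ, σ⟫ / ‖ξ‖ with hc
      rw [hin] at p1 p2
      unfold Phi at hP
      set ξp := (1/2 : ℝ) • ξ + (‖ξ‖ / 2) • σ
      set ξm := (1/2 : ℝ) • ξ - (‖ξ‖ / 2) • σ
      have hgg : g ξ = g ξp * g ξm := by
        rw [hg]; simp only
        rw [← Complex.ofReal_mul, ← Real.exp_add, p1, p2]
        congr 2; ring
      have hmem : ∀ η : E3, ‖η‖ ^ 2 ≤ ‖ξ‖ ^ 2 → K η ≤ K ξ := by
        intro η h
        have h' : ‖η‖ ≤ ‖ξ‖ := (sq_le_sq₀ (norm_nonneg _) (norm_nonneg _)).1 h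
        refine hmax ?_
        rw [mem_closedBall_zero_iff] at hξm ⊢
        exact h'.trans hξm
      have hsum : ‖ξp‖ ^ 2 + ‖ξm‖ ^ 2 = ‖ξ‖ ^ 2 := by rw [p1, p2]; ring
      have k1 := mul_le_mul_of_nonneg_left (hmem ξp (by nlinarith [sq_nonneg ‖ξm‖])) (sq_nonneg ‖ξp‖)
      have k2 := mul_le_mul_of_nonneg_left (hmem ξm (by nlinarith [sq_nonneg ‖ξp‖])) (sq_nonneg ‖ξm‖)
      have k3 : ‖ξp‖ ^ 2 * K ξ + ‖ξm‖ ^ 2 * K ξ = ‖ξ‖ ^ 2 * K ξ := by rw [← add_mul, hsum]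
      rw [hKv] at k1 k2 k3
      have hu1 : u ξ ≤ u ξp + u ξm + δ * ‖ξ‖ ^ 4 / 4 * (1 - c ^ 2) := by
        have e : charFn F ξ - g ξ = ((charFn F ξp - g ξp) * charFn F ξm + g ξp * (charFn F ξm - g ξm))
            - (charFn F ξp * charFn F ξm - charFn F ξ) := by rw [hgg]; ring
        have n1 := norm_sub_le ((charFn F ξp - g ξp) * charFn F ξm + g ξp * (charFn F ξm - g ξm))
          (charFn F ξp * charFn F ξm - charFn F ξ)
        have n2 := norm_add_le ((charFn F ξp - g ξp) * charFn F ξm) (g ξp * (charFn F ξm - g ξm))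
        rw [← e] at n1
        rw [norm_mul, norm_mul] at n2
        have n3 := mul_le_mul_of_nonneg_left (norm_charFn_le F ξm) (norm_nonneg (charFn F ξp - g ξp))
        have n4 := mul_le_mul_of_nonneg_right (hg1 ξp) (norm_nonneg (charFn F ξm - g ξm))
        rw [hu]; simp only
        linarith
      have q1 : ‖ξp‖ ^ 4 = (‖ξ‖ ^ 2 * (1 + c) / 2) ^ 2 := by
        rw [show ‖ξp‖ ^ 4 = (‖ξp‖ ^ 2) ^ 2 by ring, p1]; ring
      have q2 : ‖ξm‖ ^ 4 = (‖ξ‖ ^ 2 * (1 - c) / 2) ^ 2 := by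
        rw [show ‖ξm‖ ^ 4 = (‖ξm‖ ^ 2) ^ 2 by ring, p2]; ring
      rw [q1] at k1
      rw [q2] at k2
      have hpos : 0 < δ * ‖ξ‖ ^ 4 * (1 - c ^ 2) := by
        have : 0 < 1 - c ^ 2 := by linarith
        positivity
      nlinarith
    have hle : K ξ₀ ≤ K ξ := hmax (by simp)
    rw [hξ0] at hle
    have hK0 : K 0 = 0 := by simp [hK]
    rw [hK0] at hle
    have := mul_nonpos_of_nonneg_of_nonpos (sq_nonneg ‖ξ₀‖) hle
    rw [hKv] at this
    linarith
  have hfin : u ξ₀ ≤ 0 := by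
    have ht : Tendsto (fun r : ℝ => r * ‖ξ₀‖ ^ 4) (𝓝[>] 0) (𝓝 (0 * ‖ξ₀‖ ^ 4)) :=
      (Continuous.tendsto (by fun_prop) 0).mono_left nhdsWithin_le_nhds
    rw [zero_mul] at ht
    refine ge_of_tendsto ht ?_
    filter_upwards [self_mem_nhdsWithin] with r hr using main r hr
  have := norm_le_zero_iff.1 hfin
  exact sub_eq_zero.1 this

lemma caseB_kern {b : ℝ → ℝ} (hbm : Measurable b) (hb0 : ∀ x, 0 ≤ b x) {F : Measure E3}
    [IsProbabilityMeasure F] {C : ℝ} (hC : ∀ ξ, ‖charFn F ξ - 1‖ ≤ C * ‖ξ‖ ^ 2)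
    (hk : ∀ ξ, Integrable (kern b F ξ) nu)
    (hA : ¬ Integrable (fun σ : E3 => b (σ 0) * (1 - σ 0 ^ 2)) nu) (ξ : E3) :
    ∫ σ, kern b F ξ σ ∂nu = 0 := by
  obtain ⟨h2, -⟩ := mom hC
  have hE0 : 0 ≤ En F := integral_nonneg fun v => sq_nonneg _
  have hq : ∀ ξ, Qf F ξ = En F / 3 * ‖ξ‖ ^ 2 := by
    intro ξ
    by_cases h0 : ξ = 0
    · subst h0; simp [Qf]
    · have hn : 0 < ‖ξ‖ := norm_pos_iff.2 h0
      have := C2' hbm hb0 h2 hC hk hA (e := ‖ξ‖⁻¹ • ξ) (by rw [norm_smul]; simp [hn.ne'])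
      rw [Qf_smul] at this
      rw [this]; field_simp
  have G := gauss hC (by positivity) hq (fun ξ hξ ε hε => star hbm hb0 hk hA hξ hε)
  have : ∫ σ, kern b F ξ σ ∂nu = ∫ σ : E3, (0:ℂ) ∂nu := by
    refine integral_congr_ae ?_
    filter_upwards [nu_ae] with σ hσ
    obtain ⟨p1, p2⟩ := norm_sq_pm (ξ := ξ) hσ
    unfold kern Phi
    rw [G, G, G, p1, p2, ← Complex.ofReal_mul, ← Real.exp_add]
    ring_nf
  rw [this]; simp


lemma sum_expand {F : Measure E3} [IsProbabilityMeasure F] {C : ℝ}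
    (hC : ∀ ξ, ‖charFn F ξ - 1‖ ≤ C * ‖ξ‖ ^ 2) {r : ℝ} (hr : 0 < r) :
    ‖charFn F (r • ei 0) + charFn F (r • ei 1) + charFn F (r • ei 2) - 3
      + ((r ^ 2 * En F / 2 : ℝ) : ℂ)‖ ≤ 6 * r ^ 2 * Th F r := by
  obtain ⟨h2, -⟩ := mom hC
  have h : ∀ i, ‖charFn F (r • ei i) - 1 + ((r ^ 2 * Qf F (ei i) / 2 : ℝ) : ℂ)‖ ≤ 2 * r ^ 2 * Th F r := by
    intro i
    have := charFn_expand h2 (r • ei i)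
    rw [mean_zero hC, Qf_smul, norm_smul, norm_ei, mul_one, Real.norm_eq_abs, abs_of_pos hr] at this
    refine le_trans (le_of_eq ?_) this
    congr 1; push_cast; ring
  have e : charFn F (r • ei 0) + charFn F (r • ei 1) + charFn F (r • ei 2) - 3
      + ((r ^ 2 * En F / 2 : ℝ) : ℂ) =
      (charFn F (r • ei 0) - 1 + ((r ^ 2 * Qf F (ei 0) / 2 : ℝ) : ℂ))
      + (charFn F (r • ei 1) - 1 + ((r ^ 2 * Qf F (ei 1) / 2 : ℝ) : ℂ))
      + (charFn F (r • ei 2) - 1 + ((r ^ 2 * Qf F (ei 2) / 2 : ℝ) : ℂ)) := by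
    rw [En_eq_sum h2]; push_cast; ring
  rw [e]
  refine (norm_add₃_le).trans ?_
  linarith [h 0, h 1, h 2]

lemma sum_kern {b : ℝ → ℝ} (hb0 : ∀ x, 0 ≤ b x) {F : Measure E3} [IsProbabilityMeasure F]
    {C : ℝ} (hC : ∀ ξ, ‖charFn F ξ - 1‖ ≤ C * ‖ξ‖ ^ 2) {r : ℝ} (hr : 0 < r)
    (hk : ∀ ξ, Integrable (kern b F ξ) nu)
    (hA : Integrable (fun σ : E3 => b (σ 0) * (1 - σ 0 ^ 2)) nu) :
    ‖((∫ σ, kern b F (r • ei 0) σ ∂nu) + (∫ σ, kern b F (r • ei 1) σ ∂nu)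
      + ∫ σ, kern b F (r • ei 2) σ ∂nu) / ((r ^ 2 : ℝ) : ℂ)‖
      ≤ (∫ σ : E3, b (σ 0) * (1 - σ 0 ^ 2) ∂nu) * (3 / 4 * (16 * Th F r + C ^ 2 * r ^ 2)) := by
  obtain ⟨h2, -⟩ := mom hC
  set B := ∫ σ : E3, b (σ 0) * (1 - σ 0 ^ 2) ∂nu
  have h := fun i => C1' hb0 h2 hC hr (norm_ei i) (hk (r • ei i)) hA
  have e : (∫ σ, kern b F (r • ei 0) σ ∂nu) + (∫ σ, kern b F (r • ei 1) σ ∂nu)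
      + ∫ σ, kern b F (r • ei 2) σ ∂nu =
      (∫ σ, kern b F (r • ei 0) σ ∂nu + ((r ^ 2 / 8 * B * (En F - 3 * Qf F (ei 0)) : ℝ) : ℂ))
      + (∫ σ, kern b F (r • ei 1) σ ∂nu + ((r ^ 2 / 8 * B * (En F - 3 * Qf F (ei 1)) : ℝ) : ℂ))
      + (∫ σ, kern b F (r • ei 2) σ ∂nu + ((r ^ 2 / 8 * B * (En F - 3 * Qf F (ei 2)) : ℝ) : ℂ)) := by
    rw [En_eq_sum h2]; push_cast; ring
  rw [norm_div, Complex.norm_real, Real.norm_eq_abs, abs_of_pos (by positivity : 0 < r ^ 2),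
    div_le_iff₀ (by positivity), e]
  refine (norm_add₃_le).trans ?_
  refine (add_le_add (add_le_add (h 0) (h 1)) (h 2)).trans (le_of_eq ?_)
  ring

lemma caseA {b : ℝ → ℝ} (hb0 : ∀ x, 0 ≤ b x) {F : ℝ → Measure E3}
    (hFprob : ∀ t, IsProbabilityMeasure (F t)) {t C : ℝ} (ht : 0 < t)
    (hC : ∀ s ∈ Icc 0 t, ∀ ξ, ‖charFn (F s) ξ - 1‖ ≤ C * ‖ξ‖ ^ 2)
    {ψ : ℝ → E3 → ℂ} (hψch : ∀ t ≥ 0, ψ t = charFn (F t))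
    (hk : ∀ s ≥ 0, ∀ ξ, Integrable (kern b (F s) ξ) nu)
    (hd : ∀ s ≥ 0, ∀ ξ, HasDerivWithinAt (fun τ => ψ τ ξ) (∫ σ, kern b (F s) ξ σ ∂nu) (Ici 0) s)
    (hA : Integrable (fun σ : E3 => b (σ 0) * (1 - σ 0 ^ 2)) nu) : En (F t) = En (F 0) := by
  set B := ∫ σ : E3, b (σ 0) * (1 - σ 0 ^ 2) ∂nu with hB
  have hB0 : 0 ≤ B := by
    refine integral_nonneg_of_ae ?_
    filter_upwards [nu_ae] with σ hσ
    have hs : σ 0 ^ 2 + σ 1 ^ 2 + σ 2 ^ 2 = 1 := by rw [← norm_sq3, hσ]; norm_num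
    have hs0 : 0 ≤ 1 - σ 0 ^ 2 := by nlinarith [sq_nonneg (σ 1), sq_nonneg (σ 2)]
    exact mul_nonneg (hb0 _) hs0
  set G : ℝ → ℝ → ℂ := fun r s => ((∫ σ, kern b (F s) (r • ei 0) σ ∂nu)
    + (∫ σ, kern b (F s) (r • ei 1) σ ∂nu) + ∫ σ, kern b (F s) (r • ei 2) σ ∂nu) / ((r ^ 2 : ℝ) : ℂ) with hG
  set f : ℝ → ℝ → ℂ := fun r s =>
    (ψ s (r • ei 0) + ψ s (r • ei 1) + ψ s (r • ei 2)) / ((r ^ 2 : ℝ) : ℂ) with hf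
  have hfd : ∀ r, ∀ s ≥ 0, HasDerivWithinAt (f r) (G r s) (Ici 0) s := fun r s hs =>
    (((hd s hs _).add (hd s hs _)).add (hd s hs _)).div_const _
  have hfd' : ∀ r, ∀ s > 0, HasDerivAt (f r) (G r s) s := fun r s hs =>
    (hfd r s hs.le).hasDerivAt (Ici_mem_nhds hs)
  have hC0 : 0 ≤ C := C_nonneg (hC 0 ⟨le_rfl, ht.le⟩)
  have hGm : ∀ r, AEStronglyMeasurable (G r) (volume.restrict (Ioc 0 t)) := by
    intro r
    refine (stronglyMeasurable_deriv (f r)).aestronglyMeasurable.congr ?_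
    filter_upwards [ae_restrict_mem measurableSet_Ioc] with s hs
    exact (hfd' r s hs.1).deriv
  have hGb : ∀ r, 0 < r → ∀ s ∈ Icc 0 t, ‖G r s‖ ≤ B * (3 / 4 * (16 * Th (F s) r + C ^ 2 * r ^ 2)) :=
    fun r hr s hs => by
      have := hFprob s
      exact sum_kern hb0 (hC s hs) hr (hk s hs.1) hA
  have hGb' : ∀ r, 0 < r → ∀ s ∈ Icc 0 t, ‖G r s‖ ≤ B * (3 / 4 * (16 * (6 * C) + C ^ 2 * r ^ 2)) := by
    intro r hr s hs
    refine (hGb r hr s hs).trans ?_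
    have := hFprob s
    obtain ⟨h2, h6⟩ := mom (hC s hs)
    have := (Th_le h2 hr.le).trans h6
    gcongr
  have hsub : Ioc 0 t ⊆ Icc 0 t := Ioc_subset_Icc_self
  have hFTC : ∀ r, 0 < r → ∫ s in (0:ℝ)..t, G r s = f r t - f r 0 := by
    intro r hr
    refine intervalIntegral.integral_eq_sub_of_hasDerivAt_of_le ht.le ?_ ?_ ?_
    · intro s hs
      exact ((hfd r s hs.1).continuousWithinAt).mono Icc_subset_Ici_self
    · intro s hs
      exact hfd' r s hs.1
    · rw [intervalIntegrable_iff_integrableOn_Ioc_of_le ht.le]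
      refine Integrable.of_bound (hGm r)
        (B * (3 / 4 * (16 * (6 * C) + C ^ 2 * r ^ 2))) ?_
      filter_upwards [ae_restrict_mem measurableSet_Ioc] with s hs using hGb' r hr s (hsub hs)
  have hlim : Tendsto (fun r => ∫ s in (0:ℝ)..t, G r s) (𝓝[>] 0) (𝓝 (∫ s in (0:ℝ)..t, (0:ℂ))) := by
    refine intervalIntegral.tendsto_integral_filter_of_dominated_convergence
      (fun _ => B * (3 / 4 * (16 * (6 * C) + C ^ 2 * 1 ^ 2))) ?_ ?_ ?_ ?_
    · filter_upwards with r
      rw [uIoc_of_le ht.le]; exact hGm r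
    · filter_upwards [Ioo_mem_nhdsGT (zero_lt_one (α := ℝ))] with r hr
      filter_upwards with s hs
      rw [uIoc_of_le ht.le] at hs
      refine (hGb' r hr.1 s (hsub hs)).trans ?_
      have h0 := hr.1.le
      have h1 := hr.2.le
      gcongr
    · exact intervalIntegrable_const
    · filter_upwards with s hs
      rw [uIoc_of_le ht.le] at hs
      have := hFprob s
      obtain ⟨h2, -⟩ := mom (hC s (hsub hs))
      have t2 : Tendsto (fun r : ℝ => C ^ 2 * r ^ 2) (𝓝[>] 0) (𝓝 (C ^ 2 * 0 ^ 2)) :=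
        (Continuous.tendsto (by fun_prop) 0).mono_left nhdsWithin_le_nhds
      have t1 := ((((tendsto_Th h2).const_mul 16).add t2).const_mul (3/4)).const_mul B
      refine squeeze_zero_norm' ?_ (by simpa using t1)
      filter_upwards [self_mem_nhdsWithin] with r hr using hGb r hr s (hsub hs)
  rw [intervalIntegral.integral_zero] at hlim
  have hpt := hFprob t
  have hp0 := hFprob 0
  have hCt := hC t ⟨ht.le, le_rfl⟩
  have hC00 := hC 0 ⟨le_rfl, ht.le⟩
  obtain ⟨m1, -⟩ := mom hCt
  obtain ⟨m0, -⟩ := mom hC00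
  have hfin : |(En (F t) - En (F 0)) / 2| ≤ 0 := by
    have T := (hlim.norm.add ((tendsto_Th m1).const_mul 6)).add ((tendsto_Th m0).const_mul 6)
    simp only [norm_zero, mul_zero, add_zero] at T
    refine ge_of_tendsto T ?_
    filter_upwards [self_mem_nhdsWithin] with r hr
    have hr : 0 < r := hr
    rw [hFTC r hr]
    have x1 := sum_expand hCt hr
    have x0 := sum_expand hC00 hr
    have hr2 : ((r ^ 2 : ℝ) : ℂ) ≠ 0 := by
      rw [Complex.ofReal_ne_zero]; positivity
    have e : (((r ^ 2 * ((En (F t) - En (F 0)) / 2) : ℝ)) : ℂ)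
        = (charFn (F t) (r • ei 0) + charFn (F t) (r • ei 1) + charFn (F t) (r • ei 2) - 3
            + ((r ^ 2 * En (F t) / 2 : ℝ) : ℂ))
          - (charFn (F 0) (r • ei 0) + charFn (F 0) (r • ei 1) + charFn (F 0) (r • ei 2) - 3
            + ((r ^ 2 * En (F 0) / 2 : ℝ) : ℂ)) - ((r ^ 2 : ℝ) : ℂ) * (f r t - f r 0) := by
      have : ((r ^ 2 : ℝ) : ℂ) * (f r t - f r 0) =
          (charFn (F t) (r • ei 0) + charFn (F t) (r • ei 1) + charFn (F t) (r • ei 2))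
          - (charFn (F 0) (r • ei 0) + charFn (F 0) (r • ei 1) + charFn (F 0) (r • ei 2)) := by
        rw [hf]; simp only
        rw [hψch t ht.le, hψch 0 le_rfl, mul_sub, mul_div_cancel₀ _ hr2, mul_div_cancel₀ _ hr2]
      rw [this]; push_cast; ring
    have n := (norm_sub_le ((charFn (F t) (r • ei 0) + charFn (F t) (r • ei 1) + charFn (F t) (r • ei 2) - 3
            + ((r ^ 2 * En (F t) / 2 : ℝ) : ℂ))
          - (charFn (F 0) (r • ei 0) + charFn (F 0) (r • ei 1) + charFn (F 0) (r • ei 2) - 3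
            + ((r ^ 2 * En (F 0) / 2 : ℝ) : ℂ))) (((r ^ 2 : ℝ) : ℂ) * (f r t - f r 0))).trans
        (add_le_add_left (norm_sub_le _ _) _)
    rw [← e, norm_mul, Complex.norm_real, Complex.norm_real, Real.norm_eq_abs, Real.norm_eq_abs, abs_mul,
      abs_of_pos (by positivity : 0 < r ^ 2)] at n
    have hrr : 0 < r ^ 2 := by positivity
    refine le_of_mul_le_mul_left (n.trans ?_) hrr
    linarith
  have := abs_nonpos_iff.1 hfin
  linarith

lemma En_const {b : ℝ → ℝ} (hbm : Measurable b) (hb0 : ∀ x, 0 ≤ b x) {F : ℝ → Measure E3}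
    (hFprob : ∀ t, IsProbabilityMeasure (F t)) {t C : ℝ} (ht : 0 < t)
    (hC : ∀ s ∈ Icc 0 t, ∀ ξ, ‖charFn (F s) ξ - 1‖ ≤ C * ‖ξ‖ ^ 2)
    {ψ : ℝ → E3 → ℂ} (hψch : ∀ t ≥ 0, ψ t = charFn (F t))
    (hk : ∀ s ≥ 0, ∀ ξ, Integrable (kern b (F s) ξ) nu)
    (hd : ∀ s ≥ 0, ∀ ξ, HasDerivWithinAt (fun τ => ψ τ ξ) (∫ σ, kern b (F s) ξ σ ∂nu) (Ici 0) s) :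
    En (F t) = En (F 0) := by
  by_cases hA : Integrable (fun σ : E3 => b (σ 0) * (1 - σ 0 ^ 2)) nu
  · exact caseA hb0 hFprob ht hC hψch hk hd hA
  · have hpt := hFprob t
    have hp0 := hFprob 0
    have hconst : ∀ ξ, ψ t ξ = ψ 0 ξ := by
      intro ξ
      refine constant_of_has_deriv_right_zero (f := fun τ => ψ τ ξ) (a := 0) (b := t) ?_ ?_ t
        ⟨ht.le, le_rfl⟩
      · intro s hs
        exact ((hd s hs.1 ξ).continuousWithinAt).mono Icc_subset_Ici_self
      · intro s hs
        have hps := hFprob s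
        have h := hd s hs.1 ξ
        rw [caseB_kern hbm hb0 (hC s ⟨hs.1, hs.2.le⟩) (hk s hs.1) hA ξ] at h
        exact h.mono (Ici_subset_Ici.2 hs.1)
    have : F t = F 0 := by
      apply Measure.ext_of_charFun
      ext ξ
      have := hconst (-ξ)
      rw [hψch t ht.le, hψch 0 le_rfl, charFn_eq_charFun, charFn_eq_charFun, neg_neg] at this
      exact this
    rw [this]

/-- energy inequality, and energy conservation in the mild
singularity case `α₀ ≤ 1`. -/
theorem energy_inequality_conservation
    (b : ℝ → ℝ) (hb_meas : Measurable b) (hb_nonneg : ∀ x, 0 ≤ b x)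
    (α₀ : ℝ) (hα₀0 : 0 < α₀) (hα₀2 : α₀ ≤ 2)
    (hint : (∫⁻ θ : ℝ in Set.Ioc 0 (π/2),
        ENNReal.ofReal (Real.sin (θ/2) ^ α₀ * b (Real.cos θ) * Real.sin θ)) < ⊤)
    (F : ℝ → Measure E3) (hFprob : ∀ t, IsProbabilityMeasure (F t))
    (hmom2 : (∫⁻ v, ENNReal.ofReal (‖v‖ ^ 2) ∂(F 0)) < ⊤)
    (ψ : ℝ → E3 → ℂ) (hψch : ∀ t ≥ 0, ψ t = charFn (F t))
    (hψ : IsBobylevSolution b ψ (charFn (F 0)))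
    (hψK : ∀ t ≥ 0, KBdd 2 (ψ t)) (hψc : KContinuous 2 ψ) :
    ∀ t > (0:ℝ),
      ((∫⁻ v, ENNReal.ofReal (‖v‖ ^ 2) ∂(F t)) ≤ ∫⁻ v, ENNReal.ofReal (‖v‖ ^ 2) ∂(F 0))
      ∧ (α₀ ≤ 1 →
        (∫⁻ v, ENNReal.ofReal (‖v‖ ^ 2) ∂(F t)) = ∫⁻ v, ENNReal.ofReal (‖v‖ ^ 2) ∂(F 0)) := by
  intro t ht
  obtain ⟨C, hC⟩ := unif_C hFprob hψch hψK hψc t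
  have hpt := hFprob t
  have hp0 := hFprob 0
  have hE : En (F t) = En (F 0) := by
    refine En_const hb_meas hb_nonneg hFprob ht hC hψch
      (fun s hs ξ => (kern_int (hψch s hs) ξ (hψ.integrable s hs ξ)).1) (fun s hs ξ => ?_)
    rw [← (kern_int (hψch s hs) ξ (hψ.integrable s hs ξ)).2]
    exact hψ.eq s hs ξ
  have key : (∫⁻ v, ENNReal.ofReal (‖v‖ ^ 2) ∂(F t)) = ∫⁻ v, ENNReal.ofReal (‖v‖ ^ 2) ∂(F 0) := by
    rw [En_lint (mom (hC t ⟨ht.le, le_rfl⟩)).1, En_lint (mom (hC 0 ⟨le_rfl, ht.le⟩)).1, hE]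
  exact ⟨key.le, fun _ => key⟩
end
end

section
/- (Post-collisional velocity weight estimate.) Let α ≥ 1. There exists a constant C_α > 0 such that for all v, v_* ∈ ℝ³ with v ≠ v_* and all σ ∈ S² with (v − v_*)·σ ≥ 0, setting v' := (v + v_*)/2 + (|v − v_*|/2)σ and letting θ ∈ [0, π/2] be defined by cos θ = (v − v_*)·σ / |v − v_*|, one has ⟨v'⟩^α − ⟨v⟩^α ≤ C_α ( ⟨v⟩^{α−1} + ⟨v_*⟩^{α−1} ) |v − v_*| sin(θ/2), where ⟨v⟩ := (1 + |v|²)^{1/2}. -/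
noncomputable section

open MeasureTheory Real Filter Metric Set
open scoped RealInnerProductSpace Topology

theorem weight_bernoulli {α x y : ℝ} (hα : 1 ≤ α) (hx : 0 < x) (hy : 0 < y) :
    x ^ α - y ^ α ≤ α * x ^ (α - 1) * (x - y) := by
  have hyx : 0 < y / x := div_pos hy hx
  have h := one_add_mul_self_le_rpow_one_add (s := y / x - 1) (by linarith) hα
  have e : (1 + (y / x - 1)) = y / x := by ring
  rw [e, Real.div_rpow hy.le hx.le] at h
  have hxa : 0 < x ^ α := Real.rpow_pos_of_pos hx α
  have h2 := mul_le_mul_of_nonneg_left h hxa.le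
  rw [mul_div_cancel₀ _ hxa.ne'] at h2
  have e2 : x ^ α = x ^ (α - 1) * x := by
    rw [← Real.rpow_add_one hx.ne']; congr 1; ring
  have e3 : x ^ α * (1 + α * (y / x - 1)) = x ^ α - α * x ^ (α - 1) * (x - y) := by
    rw [e2]; field_simp; ring
  linarith

theorem weight_scalar {α x y z d : ℝ} (hα : 1 ≤ α) (hx : 0 < x) (hy : 0 < y) (hz : 0 < z)
    (hd : 0 ≤ d) (hxd : x - y ≤ d) (hxyz : x ≤ y + z) :
    x ^ α - y ^ α ≤ α * 2 ^ (α - 1) * (y ^ (α - 1) + z ^ (α - 1)) * d := by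
  have h1 := weight_bernoulli hα hx hy
  have hβ : 0 ≤ α - 1 := by linarith
  have hp : 0 ≤ x ^ (α - 1) := Real.rpow_nonneg hx.le _
  have hyp : 0 ≤ y ^ (α - 1) := Real.rpow_nonneg hy.le _
  have hzp : 0 ≤ z ^ (α - 1) := Real.rpow_nonneg hz.le _
  have h2p : (0:ℝ) ≤ 2 ^ (α - 1) := Real.rpow_nonneg (by norm_num) _
  have h3 : x ^ (α - 1) ≤ 2 ^ (α - 1) * (y ^ (α - 1) + z ^ (α - 1)) := by
    rcases le_total y z with h | h
    · have := Real.rpow_le_rpow hx.le (show x ≤ 2 * z by linarith) hβ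
      rw [Real.mul_rpow (by norm_num) hz.le] at this
      nlinarith
    · have := Real.rpow_le_rpow hx.le (show x ≤ 2 * y by linarith) hβ
      rw [Real.mul_rpow (by norm_num) hy.le] at this
      nlinarith
  calc x ^ α - y ^ α ≤ α * x ^ (α - 1) * (x - y) := h1
    _ ≤ α * x ^ (α - 1) * d := by gcongr
    _ ≤ α * (2 ^ (α - 1) * (y ^ (α - 1) + z ^ (α - 1))) * d := by gcongr
    _ = _ := by ring

/-- post-collisional velocity weight estimate. -/
theorem post_collisional_weight_estimate (α : ℝ) (hα : 1 ≤ α) :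
    ∃ C > (0:ℝ), ∀ v vs : E3, v ≠ vs → ∀ σ : Metric.sphere (0:E3) 1,
      0 ≤ ⟪v - vs, (σ : E3)⟫ →
      (1 + ‖(1/2 : ℝ) • (v + vs) + (‖v - vs‖ / 2) • (σ : E3)‖ ^ 2) ^ (α/2)
          - (1 + ‖v‖ ^ 2) ^ (α/2)
        ≤ C * ((1 + ‖v‖ ^ 2) ^ ((α-1)/2) + (1 + ‖vs‖ ^ 2) ^ ((α-1)/2)) * ‖v - vs‖
            * Real.sin (Real.arccos (⟪v - vs, (σ : E3)⟫ / ‖v - vs‖) / 2) := by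
  refine ⟨α * 2 ^ (α - 1), by positivity, ?_⟩
  intro v vs hv σ hσ
  have hs : ‖(σ : E3)‖ = 1 := by simp
  obtain ⟨s, hsd⟩ : ∃ s : E3, s = (σ : E3) := ⟨_, rfl⟩
  rw [← hsd] at hs hσ ⊢
  have hw : 0 < ‖v - vs‖ := norm_pos_iff.mpr (sub_ne_zero.mpr hv)
  set w := ‖v - vs‖ with hwdef
  set c := ⟪v - vs, s⟫ / w with hc
  have hcw : ⟪v - vs, s⟫ = c * w := by rw [hc]; field_simp
  have hc0 : 0 ≤ c := div_nonneg hσ hw.le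
  have hc1 : c ≤ 1 := by
    rw [hc, div_le_one hw]
    have := real_inner_le_norm (v - vs) s
    rwa [hs, mul_one] at this
  have hsin0 : 0 ≤ Real.sin (Real.arccos c / 2) :=
    Real.sin_nonneg_of_nonneg_of_le_pi (by linarith [Real.arccos_nonneg c])
      (by linarith [Real.arccos_nonneg c, Real.arccos_le_pi c])
  have hsin2 : Real.sin (Real.arccos c / 2) ^ 2 = (1 - c) / 2 := by
    have h := Real.cos_arccos (by linarith : -1 ≤ c) hc1
    have h2 := Real.cos_two_mul (Real.arccos c / 2)
    have h3 := Real.sin_sq_add_cos_sq (Real.arccos c / 2)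
    rw [show 2 * (Real.arccos c / 2) = Real.arccos c by ring, h] at h2
    linarith
  set S := Real.sin (Real.arccos c / 2) with hS
  set p : E3 := (1/2 : ℝ) • (v + vs) + (w / 2) • s with hp
  have hwsq : w ^ 2 = ‖v‖ ^ 2 - 2 * ⟪v, vs⟫ + ‖vs‖ ^ 2 := by
    rw [hwdef]; exact norm_sub_sq_real v vs
  have hpv : ‖p - v‖ ^ 2 = (w * S) ^ 2 := by
    have e : p - v = (w / 2) • s - (1/2 : ℝ) • (v - vs) := by
      rw [hp]; module
    rw [e, norm_sub_sq_real, norm_smul, norm_smul, inner_smul_left, inner_smul_right,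
      real_inner_comm, hcw, hs, mul_pow, mul_pow, mul_pow, hsin2, ← hwdef]
    simp only [Real.norm_eq_abs, sq_abs, conj_trivial]
    ring
  have hd0 : 0 ≤ w * S := mul_nonneg hw.le hsin0
  have hpv' : ‖p - v‖ = w * S := by
    rwa [sq_eq_sq₀ (norm_nonneg _) hd0] at hpv
  have hpn : ‖p‖ ≤ ‖v‖ + w * S := by
    have := norm_add_le v (p - v)
    rwa [add_sub_cancel, hpv'] at this
  have hE : ‖p‖ ^ 2 ≤ ‖v‖ ^ 2 + ‖vs‖ ^ 2 := by
    have h1 : ‖(1/2 : ℝ) • (v + vs) + (w / 2) • s‖ ^ 2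
        + ‖(1/2 : ℝ) • (v + vs) - (w / 2) • s‖ ^ 2 = ‖v‖ ^ 2 + ‖vs‖ ^ 2 := by
      rw [norm_add_sq_real, norm_sub_sq_real, norm_smul, norm_smul, mul_pow, mul_pow,
        norm_add_sq_real, hs]
      simp only [Real.norm_eq_abs, sq_abs]
      linarith
    have := sq_nonneg ‖(1/2 : ℝ) • (v + vs) - (w / 2) • s‖
    rw [hp]; linarith
  have key : ∀ (u : E3) (r : ℝ), (1 + ‖u‖ ^ 2) ^ (r / 2) = (√(1 + ‖u‖ ^ 2)) ^ r := by
    intro u r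
    rw [Real.sqrt_eq_rpow, ← Real.rpow_mul (by positivity)]
    congr 1; ring
  have spos : ∀ u : E3, 0 < √(1 + ‖u‖ ^ 2) := fun u => Real.sqrt_pos.mpr (by positivity)
  have ssq : ∀ u : E3, √(1 + ‖u‖ ^ 2) ^ 2 = 1 + ‖u‖ ^ 2 := fun u => Real.sq_sqrt (by positivity)
  rw [key, key, key, key, mul_assoc _ w S]
  refine weight_scalar hα (spos p) (spos v) (spos vs) hd0 ?_ ?_
  · have h1 : ‖v‖ ≤ √(1 + ‖v‖ ^ 2) := Real.le_sqrt_of_sq_le (by linarith)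
    have h2 : √(1 + ‖p‖ ^ 2) ≤ √(1 + ‖v‖ ^ 2) + w * S := by
      refine abs_le_of_sq_le_sq' ?_ (by linarith [spos v]) |>.2
      have h3 := pow_le_pow_left₀ (norm_nonneg p) hpn 2
      rw [ssq, add_sq, ssq]
      nlinarith [mul_le_mul_of_nonneg_right h1 hd0]
    linarith
  · refine abs_le_of_sq_le_sq' ?_ (by linarith [spos v, spos vs]) |>.2
    rw [ssq, add_sq, ssq, ssq]
    nlinarith [mul_pos (spos v) (spos vs)]
end
end

section
/- (Moments imply membership in 𝒦^α.) Let Ψ be a Borel probability measure on ℝ³ such that ∫_{ℝ³} |v|^α dΨ(v) < ∞ for some α ∈ (0, 2], and, in the case α > 1, assume additionally that ∫_{ℝ³} v_j dΨ(v) = 0 for j = 1, 2, 3. Then the characteristic function ψ(ξ) = ∫_{ℝ³} exp(−i v·ξ) dΨ(v) satisfies sup_{ξ≠0} |ψ(ξ) − 1|/|ξ|^α < ∞, i.e. ψ ∈ 𝒦^α. -/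
noncomputable section

open MeasureTheory Real Filter Metric Set
open scoped RealInnerProductSpace Topology

lemma aux_one (x : ℝ) : ‖Complex.exp (-(Complex.I * (x : ℂ))) - 1‖ ≤ |x| := by
  have h := Real.norm_exp_I_mul_ofReal_sub_one_le (x := -x)
  have e : -(Complex.I * (x : ℂ)) = Complex.I * ((-x : ℝ) : ℂ) := by push_cast; ring
  rw [e]
  simpa using h

lemma aux_two (x : ℝ) : ‖Complex.exp (-(Complex.I * (x : ℂ))) - 1‖ ≤ 2 := by
  have e : -(Complex.I * (x : ℂ)) = Complex.I * ((-x : ℝ) : ℂ) := by push_cast; ring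
  have h := Complex.norm_exp_I_mul_ofReal (-x)
  rw [e]
  calc _ ≤ ‖Complex.exp (Complex.I * ((-x : ℝ) : ℂ))‖ + ‖(1 : ℂ)‖ := norm_sub_le _ _
    _ = 2 := by rw [h]; norm_num

lemma aux_low (α x : ℝ) (h0 : 0 < α) (h1 : α ≤ 1) :
    ‖Complex.exp (-(Complex.I * (x : ℂ))) - 1‖ ≤ 2 * |x| ^ α := by
  rcases le_total |x| 1 with hx | hx
  · have h := Real.rpow_le_rpow_of_exponent_ge' (abs_nonneg x) hx h0.le h1
    rw [Real.rpow_one] at h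
    have := aux_one x
    have := abs_nonneg x
    linarith
  · have h := Real.one_le_rpow hx h0.le
    have := aux_two x
    linarith

lemma aux_high (α x : ℝ) (h1 : 1 < α) (h2 : α ≤ 2) :
    ‖Complex.exp (-(Complex.I * (x : ℂ))) - 1 + Complex.I * (x : ℂ)‖ ≤ 2 * |x| ^ α := by
  have hn : ‖-(Complex.I * (x : ℂ))‖ = |x| := by simp
  rcases le_total |x| 1 with hx | hx
  · have h := Real.rpow_le_rpow_of_exponent_ge' (abs_nonneg x) hx (by linarith) h2
    rw [Real.rpow_two] at h
    have h3 := Complex.norm_exp_sub_one_sub_id_le (x := -(Complex.I * (x : ℂ))) (by rw [hn]; exact hx)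
    rw [hn, sub_neg_eq_add] at h3
    have := sq_nonneg |x|
    linarith
  · have h := Real.rpow_le_rpow_of_exponent_le hx h1.le
    rw [Real.rpow_one] at h
    have h3 := norm_add_le (Complex.exp (-(Complex.I * (x : ℂ))) - 1) (Complex.I * (x : ℂ))
    rw [norm_neg] at hn
    have := aux_one x
    linarith

lemma aux_inner (α : ℝ) (h0 : 0 < α) (v ξ : E3) :
    2 * |⟪v, ξ⟫| ^ α ≤ 2 * ‖ξ‖ ^ α * ‖v‖ ^ α := by
  have h := Real.rpow_le_rpow (abs_nonneg _) (abs_real_inner_le_norm v ξ) h0.le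
  rw [Real.mul_rpow (norm_nonneg _) (norm_nonneg _)] at h
  linarith

/-- finite moments imply membership in `𝒦^α`. -/
theorem moments_imply_memK
    (Ψ : Measure E3) [IsProbabilityMeasure Ψ]
    (α : ℝ) (hα0 : 0 < α) (hα2 : α ≤ 2)
    (hmom : (∫⁻ v, ENNReal.ofReal (‖v‖ ^ α) ∂Ψ) < ⊤)
    (hmean : 1 < α → ∀ j : Fin 3, (∫ v : E3, v j ∂Ψ) = 0) :
    ∃ C : ℝ, ∀ ξ : E3, ξ ≠ 0 → ‖charFn Ψ ξ - 1‖ ≤ C * ‖ξ‖ ^ α := by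
  have hint : Integrable (fun v : E3 => ‖v‖ ^ α) Ψ := by
    refine ⟨(measurable_norm.pow_const α).aestronglyMeasurable, ?_⟩
    rw [hasFiniteIntegral_iff_ofReal (Eventually.of_forall fun v => by positivity)]
    exact hmom
  refine ⟨2 * ∫ v, ‖v‖ ^ α ∂Ψ, fun ξ _ => ?_⟩
  have hcont : Continuous (fun v : E3 => Complex.exp (-(Complex.I * ((⟪v, ξ⟫ : ℝ) : ℂ)))) := by
    fun_prop
  have hexp : Integrable (fun v : E3 => Complex.exp (-(Complex.I * ((⟪v, ξ⟫ : ℝ) : ℂ)))) Ψ := by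
    refine Integrable.of_bound hcont.aestronglyMeasurable 3 (Eventually.of_forall fun v => ?_)
    have h := aux_two ⟪v, ξ⟫
    have h2 := norm_le_norm_sub_add (Complex.exp (-(Complex.I * ((⟪v, ξ⟫ : ℝ) : ℂ)))) 1
    rw [norm_one] at h2
    linarith
  have hsub : charFn Ψ ξ - 1
      = ∫ v, (Complex.exp (-(Complex.I * ((⟪v, ξ⟫ : ℝ) : ℂ))) - 1) ∂Ψ := by
    rw [integral_sub hexp (integrable_const _)]
    simp [charFn]
  have hfin : ∫ v, 2 * ‖ξ‖ ^ α * ‖v‖ ^ α ∂Ψ = (2 * ∫ v, ‖v‖ ^ α ∂Ψ) * ‖ξ‖ ^ α := by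
    rw [integral_const_mul]; ring
  rw [hsub, ← hfin]
  rcases le_or_gt α 1 with h1 | h1
  · exact norm_integral_le_of_norm_le (hint.const_mul _) (Eventually.of_forall fun v =>
      (aux_low α _ hα0 h1).trans (aux_inner α hα0 v ξ))
  · have hid : Integrable (fun v : E3 => ‖v‖) Ψ := by
      refine Integrable.mono' (hint.add (integrable_const (1 : ℝ)))
        measurable_norm.aestronglyMeasurable (Eventually.of_forall fun v => ?_)
      rw [norm_norm]
      simp only [Pi.add_apply]
      have hp : 0 ≤ ‖v‖ ^ α := by positivity
      rcases le_total ‖v‖ 1 with hx | hx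
      · linarith
      · have h := Real.rpow_le_rpow_of_exponent_le hx h1.le
        rw [Real.rpow_one] at h
        linarith
    have hco : ∀ j : Fin 3, Integrable (fun v : E3 => v j) Ψ := fun j =>
      Integrable.mono' hid (by fun_prop)
        (Eventually.of_forall fun v => PiLp.norm_apply_le v j)
    have hin : ∀ v : E3, ⟪v, ξ⟫ = ∑ j, v j * ξ j := fun v => by
      simp [PiLp.inner_apply, mul_comm]
    have hii : Integrable (fun v : E3 => (⟪v, ξ⟫ : ℝ)) Ψ := by
      simp only [hin]
      exact integrable_finsetSum _ fun j _ => (hco j).mul_const _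
    have hzero : ∫ v : E3, (⟪v, ξ⟫ : ℝ) ∂Ψ = 0 := by
      simp only [hin]
      rw [integral_finsetSum _ fun j _ => (hco j).mul_const _]
      simp only [integral_mul_const, hmean h1, zero_mul, Finset.sum_const_zero]
    have hadd : ∫ v, (Complex.exp (-(Complex.I * ((⟪v, ξ⟫ : ℝ) : ℂ))) - 1) ∂Ψ
        = ∫ v, (Complex.exp (-(Complex.I * ((⟪v, ξ⟫ : ℝ) : ℂ))) - 1
          + Complex.I * ((⟪v, ξ⟫ : ℝ) : ℂ)) ∂Ψ := by
      have hA : Integrable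
          (fun v : E3 => Complex.exp (-(Complex.I * ((⟪v, ξ⟫ : ℝ) : ℂ))) - 1) Ψ :=
        hexp.sub (integrable_const _)
      have hB : Integrable (fun v : E3 => Complex.I * ((⟪v, ξ⟫ : ℝ) : ℂ)) Ψ :=
        hii.ofReal.const_mul _
      rw [integral_add hA hB, integral_const_mul, integral_complex_ofReal, hzero]
      simp
    rw [hadd]
    exact norm_integral_le_of_norm_le (hint.const_mul _) (Eventually.of_forall fun v =>
      (aux_high α _ h1 hα2).trans (aux_inner α hα0 v ξ))
end
end

section
/- (Standard coercivity from a uniform Fourier lower bound.) Let 0 < s < 1 and let the collision kernel b : (0, π/2] → [0,∞) be measurable and satisfy b(cos θ)·θ^{2+2s} → K as θ → 0+ for some K > 0. Let φ : ℝ³ → ℂ be a characteristic function such that there exists κ > 0 with 1 − |φ(η)| ≥ κ · min(1, |η|²) for all η ∈ ℝ³. Then there exist R > 0 and c > 0 such that for every ξ ∈ ℝ³ with |ξ| ≥ R: ∫_{S²} b(ξ·σ/|ξ|) ( 1 − |φ(ξ⁻)| ) dσ ≥ c |ξ|^{2s}, where ξ⁻ = (ξ − |ξ|σ)/2 and the integral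 is with respect to the surface measure on S². -/
noncomputable section

open MeasureTheory Real Filter Metric Set
open scoped RealInnerProductSpace Topology

open scoped Pointwise in
theorem cap_measure (e : E3) (he : ‖e‖ = 1) (ε : ℝ) (h0 : 0 < ε) (h1 : ε ≤ 1) :
    ENNReal.ofReal (ε ^ 2 / 256) ≤
      sphμ {σ | ε ^ 2 / 128 ≤ 1 - ⟪e, (σ : E3)⟫ ∧ 1 - ⟪e, (σ : E3)⟫ ≤ ε ^ 2} := by
  set A : Set (sphere (0 : E3) 1) :=
    {σ | ε ^ 2 / 128 ≤ 1 - ⟪e, (σ : E3)⟫ ∧ 1 - ⟪e, (σ : E3)⟫ ≤ ε ^ 2} with hA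
  have hAm : MeasurableSet A := by
    have hc : Continuous fun σ : sphere (0 : E3) 1 => 1 - ⟪e, (σ : E3)⟫ := by fun_prop
    exact (measurableSet_le measurable_const hc.measurable).inter
      (measurableSet_le hc.measurable measurable_const)
  obtain ⟨B, hB⟩ : ∃ B : OrthonormalBasis (Fin 3) ℝ E3, B 0 = e := by
    have hon : Orthonormal ℝ (({0} : Set (Fin 3)).domRestrict (fun _ => e)) := by
      constructor
      · intro i; simpa using he
      · intro i j hij
        exact absurd (Subsingleton.elim i j) hij
    obtain ⟨B, hB⟩ := hon.exists_orthonormalBasis_extension_of_card_eq (by simp)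
    exact ⟨B, hB 0 rfl⟩
  let lo : Fin 3 → ℝ := ![1/4, ε/8, 0]
  let hi : Fin 3 → ℝ := ![1/2, ε/4, ε/8]
  let box : Set (Fin 3 → ℝ) := Set.pi Set.univ fun i => Ioo (lo i) (hi i)
  have hboxm : MeasurableSet box := MeasurableSet.univ_pi fun i => measurableSet_Ioo
  have hvol : volume box = ENNReal.ofReal (ε ^ 2 / 256) := by
    simp only [box, Real.volume_pi_Ioo]
    rw [Fin.prod_univ_three, ← ENNReal.ofReal_mul, ← ENNReal.ofReal_mul]
    · congr 1; simp [lo, hi]; ring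
    · simp [lo, hi]; nlinarith
    · simp [lo, hi]; norm_num
  let T : E3 → (Fin 3 → ℝ) := fun x => WithLp.ofLp (B.repr x)
  have hT : MeasurePreserving T volume volume :=
    (PiLp.volume_preserving_ofLp (Fin 3)).comp B.measurePreserving_repr
  have hpre : volume (T ⁻¹' box) = ENNReal.ofReal (ε ^ 2 / 256) := by
    rw [hT.measure_preimage hboxm.nullMeasurableSet, hvol]
  have hsub : T ⁻¹' box ⊆ Ioo (0:ℝ) 1 • ((↑) '' A : Set E3) := by
    intro x hx
    have hx' : ∀ i, lo i < B.repr x i ∧ B.repr x i < hi i := fun i => hx i trivial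
    have h0' := hx' 0
    have h1' := hx' 1
    have h2' := hx' 2
    simp only [lo, hi, Matrix.cons_val_zero, Matrix.cons_val_one, Matrix.cons_val] at h0' h1' h2'
    have hn : ‖x‖ ^ 2 = (B.repr x 0) ^ 2 + (B.repr x 1) ^ 2 + (B.repr x 2) ^ 2 := by
      rw [← B.repr.norm_map x, EuclideanSpace.norm_sq_eq, Fin.sum_univ_three]
      simp
    have hi0 : ⟪e, x⟫ = B.repr x 0 := by rw [B.repr_apply_apply, hB]
    generalize B.repr x 0 = x0 at *
    generalize B.repr x 1 = x1 at *
    generalize B.repr x 2 = x2 at *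
    have hr0 : 0 ≤ ‖x‖ := norm_nonneg x
    have hrx : x0 ≤ ‖x‖ := by
      refine abs_le_of_sq_le_sq' ?_ hr0 |>.2
      nlinarith
    have hrpos : 0 < ‖x‖ := by linarith
    have hr1 : ‖x‖ < 1 := by
      nlinarith
    have hq1 : ε ^ 2 / 64 ≤ x1 ^ 2 + x2 ^ 2 := by nlinarith
    have hq2 : x1 ^ 2 + x2 ^ 2 ≤ 5 * ε ^ 2 / 64 := by nlinarith
    refine Set.mem_smul.2 ⟨‖x‖, ⟨hrpos, hr1⟩, ‖x‖⁻¹ • x, ⟨⟨‖x‖⁻¹ • x, ?_⟩, ?_, rfl⟩, ?_⟩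
    · simp [norm_smul, hrpos.ne']
    · have key : 1 - ⟪e, ‖x‖⁻¹ • x⟫ = (‖x‖ - x0) / ‖x‖ := by
        rw [inner_smul_right, hi0]; field_simp
      show _ ≤ 1 - ⟪e, ‖x‖⁻¹ • x⟫ ∧ 1 - ⟪e, ‖x‖⁻¹ • x⟫ ≤ _
      rw [key]
      have hprod : (‖x‖ - x0) * (‖x‖ + x0) = x1 ^ 2 + x2 ^ 2 := by linarith
      have hd : 0 ≤ ‖x‖ - x0 := by linarith
      constructor
      · rw [le_div_iff₀ hrpos]
        have : (‖x‖ - x0) * (‖x‖ + x0) ≤ (‖x‖ - x0) * 2 := by gcongr; linarith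
        have : ε ^ 2 / 128 * ‖x‖ ≤ ε ^ 2 / 128 * 1 := by gcongr
        linarith
      · rw [div_le_iff₀ hrpos]
        have : (‖x‖ - x0) * (1 / 2) ≤ (‖x‖ - x0) * (‖x‖ + x0) := by gcongr; linarith
        have : ε ^ 2 * (1 / 4) ≤ ε ^ 2 * ‖x‖ := by gcongr; linarith
        linarith
    · rw [smul_smul, mul_inv_cancel₀ hrpos.ne', one_smul]
  rw [sphμ, Measure.toSphere_apply' _ hAm, ← hpre]
  calc volume (T ⁻¹' box) ≤ volume (Ioo (0:ℝ) 1 • ((↑) '' A : Set E3)) := measure_mono hsub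
    _ ≤ _ := by
      apply le_mul_of_one_le_left zero_le
      simp

/-- standard coercivity of the collision kernel from a uniform
Fourier lower bound `1 - |φ(η)| ≥ κ min(1,|η|²)`. -/
theorem standard_coercivity
    (s K : ℝ) (hs0 : 0 < s) (hs1 : s < 1) (hK : 0 < K)
    (b : ℝ → ℝ) (hb_meas : Measurable b) (hb_nonneg : ∀ x, 0 ≤ b x)
    (hb_sing : KernelSingular b s K)
    (φ : E3 → ℂ) (hφ : IsCharFn φ)
    (κ : ℝ) (hκ : 0 < κ)
    (hlow : ∀ η : E3, κ * min 1 (‖η‖ ^ 2) ≤ 1 - ‖φ η‖) :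
    ∃ R > (0:ℝ), ∃ c > (0:ℝ), ∀ ξ : E3, R ≤ ‖ξ‖ →
      ENNReal.ofReal (c * ‖ξ‖ ^ (2*s)) ≤
        ∫⁻ σ, ENNReal.ofReal
          (b (⟪ξ, (σ : E3)⟫ / ‖ξ‖) * (1 - ‖φ (xiMinus ξ σ)‖)) ∂sphμ := by
  have hev : ∀ᶠ θ in 𝓝[>] (0:ℝ), K / 2 < b (Real.cos θ) * θ ^ (2 + 2*s) :=
    hb_sing.eventually (lt_mem_nhds (by linarith))
  obtain ⟨δ, hδ, hδb⟩ := (mem_nhdsGT_iff_exists_Ioo_subset).1 hev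
  have hδ : 0 < δ := hδ
  refine ⟨max 1 (8 / δ), by positivity,
    (K / 2 / (4:ℝ) ^ (2 + 2*s)) * (κ / 256) * (1 / 256), by positivity, fun ξ hξ => ?_⟩
  have hξ1 : 1 ≤ ‖ξ‖ := (le_max_left _ _).trans hξ
  have hξ2 : 8 / δ ≤ ‖ξ‖ := (le_max_right _ _).trans hξ
  have hp : 0 < ‖ξ‖ := by linarith
  set e : E3 := ‖ξ‖⁻¹ • ξ with he
  have hen : ‖e‖ = 1 := by simp [he, norm_smul, hp.ne']
  have hie : ∀ σ : E3, ⟪ξ, σ⟫ / ‖ξ‖ = ⟪e, σ⟫ := fun σ => by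
    rw [he, real_inner_smul_left]; field_simp
  set A : Set (sphere (0 : E3) 1) :=
    {σ | (‖ξ‖⁻¹) ^ 2 / 128 ≤ 1 - ⟪e, (σ : E3)⟫ ∧ 1 - ⟪e, (σ : E3)⟫ ≤ (‖ξ‖⁻¹) ^ 2} with hA
  have hcap := cap_measure e hen ‖ξ‖⁻¹ (by positivity) (inv_le_one_of_one_le₀ hξ1)
  rw [← hA] at hcap
  have hAm : MeasurableSet A := by
    have hc : Continuous fun σ : sphere (0 : E3) 1 => 1 - ⟪e, (σ : E3)⟫ := by fun_prop
    exact (measurableSet_le measurable_const hc.measurable).inter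
      (measurableSet_le hc.measurable measurable_const)
  set M : ℝ := (K / 2 / (4:ℝ) ^ (2 + 2*s)) * ‖ξ‖ ^ (2 + 2*s) * (κ / 256) with hM
  have hMpos : 0 ≤ M := by positivity
  have hpt : ∀ σ ∈ A, ENNReal.ofReal M ≤ ENNReal.ofReal
      (b (⟪ξ, (σ : E3)⟫ / ‖ξ‖) * (1 - ‖φ (xiMinus ξ σ)‖)) := by
    rintro σ ⟨hl, hu⟩
    apply ENNReal.ofReal_le_ofReal
    have hσ : ‖(σ : E3)‖ = 1 := by simp
    have hminus : ‖xiMinus ξ σ‖ ^ 2 = ‖ξ‖ ^ 2 * (1 - ⟪e, (σ : E3)⟫) / 2 := by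
      rw [← hie, xiMinus, norm_sub_sq_real, norm_smul, norm_smul, real_inner_smul_left,
        real_inner_smul_right, hσ, Real.norm_of_nonneg (by norm_num : (0:ℝ) ≤ 1/2),
        Real.norm_of_nonneg (by positivity : 0 ≤ ‖ξ‖ / 2)]
      field_simp
      ring
    have hm : 1 / 256 ≤ ‖xiMinus ξ σ‖ ^ 2 := by
      rw [hminus]
      have : ‖ξ‖ ^ 2 * ((‖ξ‖⁻¹) ^ 2 / 128) ≤ ‖ξ‖ ^ 2 * (1 - ⟪e, (σ : E3)⟫) := by gcongr
      have h2 : ‖ξ‖ ^ 2 * ((‖ξ‖⁻¹) ^ 2 / 128) = 1 / 128 := by field_simp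
      linarith
    have hφl : κ / 256 ≤ 1 - ‖φ (xiMinus ξ σ)‖ := by
      refine le_trans ?_ (hlow _)
      have : (1/256 : ℝ) ≤ min 1 (‖xiMinus ξ σ‖ ^ 2) := le_min (by norm_num) hm
      nlinarith
    rw [hie]
    set u : ℝ := ⟪e, (σ : E3)⟫ with hu'
    have habs : |u| ≤ 1 := by
      have := abs_real_inner_le_norm e (σ : E3)
      rwa [hen, hσ, one_mul] at this
    have hcos : Real.cos (Real.arccos u) = u := Real.cos_arccos (abs_le.1 habs).1 (abs_le.1 habs).2
    have hulow : 0 < 1 - u := lt_of_lt_of_le (by positivity) hl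
    have hθ0 : 0 < Real.arccos u := Real.arccos_pos.2 (by linarith)
    have hθπ := Real.arccos_le_pi u
    generalize Real.arccos u = θ at *
    have hθsq : θ ^ 2 ≤ (4 * ‖ξ‖⁻¹) ^ 2 := by
      have hc := Real.cos_le_one_sub_mul_cos_sq (x := θ) (by rw [abs_of_pos hθ0]; exact hθπ)
      rw [hcos] at hc
      have h1 : 2 / π ^ 2 * θ ^ 2 ≤ (‖ξ‖⁻¹) ^ 2 := by linarith
      have h2 : 1 / 8 ≤ 2 / π ^ 2 := by
        rw [div_le_div_iff₀ (by norm_num) (by positivity)]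
        nlinarith [Real.pi_le_four, Real.pi_pos]
      nlinarith [sq_nonneg θ, sq_nonneg ‖ξ‖⁻¹]
    have hθ4 : θ ≤ 4 * ‖ξ‖⁻¹ := (abs_le_of_sq_le_sq' hθsq (by positivity)).2
    have hθδ : θ < δ := by
      have : 8 ≤ ‖ξ‖ * δ := by rwa [div_le_iff₀ hδ] at hξ2
      refine lt_of_le_of_lt hθ4 ?_
      rw [← div_eq_mul_inv, div_lt_iff₀ hp]
      linarith
    have hb1 : K / 2 < b (Real.cos θ) * θ ^ (2 + 2*s) := hδb ⟨hθ0, hθδ⟩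
    rw [hcos] at hb1
    have hb2 : K / 2 / (4:ℝ) ^ (2 + 2*s) * ‖ξ‖ ^ (2 + 2*s) ≤ b u := by
      have h3 : θ ^ (2 + 2*s) ≤ (4 / ‖ξ‖) ^ (2 + 2*s) := by
        apply Real.rpow_le_rpow hθ0.le _ (by linarith)
        rwa [div_eq_mul_inv]
      rw [Real.div_rpow (by norm_num) hp.le] at h3
      have h4 : K / 2 ≤ b u * ((4:ℝ) ^ (2 + 2*s) / ‖ξ‖ ^ (2 + 2*s)) :=
        hb1.le.trans (mul_le_mul_of_nonneg_left h3 (hb_nonneg u))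
      have hx : 0 < ‖ξ‖ ^ (2 + 2*s) := by positivity
      have hy : 0 < (4:ℝ) ^ (2 + 2*s) := by positivity
      rw [mul_div_assoc', le_div_iff₀ hx] at h4
      rw [div_mul_eq_mul_div, div_le_iff₀ hy]
      exact h4
    rw [hM]
    exact mul_le_mul hb2 hφl (by positivity) (hb_nonneg u)
  calc ENNReal.ofReal ((K / 2 / (4:ℝ) ^ (2 + 2*s)) * (κ / 256) * (1 / 256) * ‖ξ‖ ^ (2*s))
      = ENNReal.ofReal M * ENNReal.ofReal ((‖ξ‖⁻¹) ^ 2 / 256) := by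
        rw [← ENNReal.ofReal_mul hMpos]
        congr 1
        rw [hM, Real.rpow_add hp, Real.rpow_two]
        field_simp
    _ ≤ ENNReal.ofReal M * sphμ A := by gcongr
    _ = ∫⁻ _ in A, ENNReal.ofReal M ∂sphμ := by rw [setLIntegral_const]
    _ ≤ ∫⁻ σ in A, ENNReal.ofReal
          (b (⟪ξ, (σ : E3)⟫ / ‖ξ‖) * (1 - ‖φ (xiMinus ξ σ)‖)) ∂sphμ :=
        setLIntegral_mono' hAm hpt
    _ ≤ _ := setLIntegral_le_lintegral _ _
end
end
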